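/- Let f : ℝ² → ℝ² be a C^∞ map with f(0)=0 of the form f = (x, xy + y⁵ + Σ_{i+j≥6} a_{ij} x^i y^j). Then a_{07} − (5/8)a_{06}² ≠ 0 if and only if f is A-equivalent to (x,y) ↦ (x, xy + y⁵ + εy⁷) for some ε ∈ {1, −1} (the butterfly), and a_{07} − (5/8)a_{06}² = 0 if and only if f is A-equivalent to (x,y) ↦ (x, xy + y⁵) (the elder butterfly). -/

import Mathlib

open Filter Topology

noncomputable section

/-- Directional derivative of a scalar function. -/
def dop (v : ℝ × ℝ) (g : ℝ × ℝ → ℝ) : ℝ × ℝ → ℝ :=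
  fun p => fderiv ℝ g p v

/-- Partial derivative operator in the first coordinate. -/
def pdx : (ℝ × ℝ → ℝ) → ℝ × ℝ → ℝ := dop (1, 0)

/-- Partial derivative operator in the second coordinate. -/
def pdy : (ℝ × ℝ → ℝ) → ℝ × ℝ → ℝ := dop (0, 1)

/-- Taylor coefficient `a_{ij} = ∂_x^i ∂_y^j g(0,0) / (i! j!)` of `g` at the origin. -/
def tcoeff (g : ℝ × ℝ → ℝ) (i j : ℕ) : ℝ :=
  (pdx^[i] (pdy^[j] g)) 0 / (Nat.factorial i * Nat.factorial j)

/-- The Jacobian determinant `λ_f` of a map `f : ℝ² → ℝ²`. -/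
def jacDet (f : ℝ × ℝ → ℝ × ℝ) (p : ℝ × ℝ) : ℝ :=
  (fderiv ℝ f p (1, 0)).1 * (fderiv ℝ f p (0, 1)).2 -
    (fderiv ℝ f p (1, 0)).2 * (fderiv ℝ f p (0, 1)).1

/-- `f` has corank one at `0` : the derivative of `f` at `0` has rank one. -/
def CorankOne (f : ℝ × ℝ → ℝ × ℝ) : Prop :=
  LinearMap.rank ((fderiv ℝ f 0).toLinearMap) = 1

/-- `η` is a null vector field for `f` near `0`. -/
def IsNullVF (f η : ℝ × ℝ → ℝ × ℝ) : Prop :=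
  η 0 ≠ 0 ∧ ∃ U ∈ 𝓝 (0 : ℝ × ℝ),
    ContDiffOn ℝ (⊤ : ℕ∞) η U ∧ ∀ p ∈ U, jacDet f p = 0 → fderiv ℝ f p (η p) = 0

/-- The derivative `(ηg)(p) = Dg(p)(η(p))` of `g` along the vector field `η`. -/
def etaD (η : ℝ × ℝ → ℝ × ℝ) (g : ℝ × ℝ → ℝ) : ℝ × ℝ → ℝ :=
  fun p => fderiv ℝ g p (η p)

/-- The iterated derivative `η^k g` along the vector field `η`. -/
def etaIter (η : ℝ × ℝ → ℝ × ℝ) : ℕ → (ℝ × ℝ → ℝ) → ℝ × ℝ → ℝ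
  | 0, g => g
  | k + 1, g => etaD η (etaIter η k g)

/-- The Hessian matrix of second partial derivatives of `g` at `0`. -/
def hess (g : ℝ × ℝ → ℝ) : Matrix (Fin 2) (Fin 2) ℝ :=
  !![pdx (pdx g) 0, pdx (pdy g) 0; pdy (pdx g) 0, pdy (pdy g) 0]

/-- `A^r`-equivalence of the `r`-jets at `0` of two map-germs `(ℝ²,0) → (ℝ²,0)`. -/
def JetEquiv (r : ℕ) (f g : ℝ × ℝ → ℝ × ℝ) : Prop :=
  ∃ φ ψ : ℝ × ℝ → ℝ × ℝ,
    ContDiff ℝ (⊤ : ℕ∞) φ ∧ ContDiff ℝ (⊤ : ℕ∞) ψ ∧ φ 0 = 0 ∧ ψ 0 = 0 ∧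
    Function.Bijective (⇑(fderiv ℝ φ 0)) ∧ Function.Bijective (⇑(fderiv ℝ ψ 0)) ∧
    ∀ i ≤ r, iteratedFDeriv ℝ i (ψ ∘ f ∘ φ) 0 = iteratedFDeriv ℝ i g 0

/-- `A`-equivalence of two map-germs `(ℝ²,0) → (ℝ²,0)`. -/
def AEquiv (f g : ℝ × ℝ → ℝ × ℝ) : Prop :=
  ∃ φ ψ : ℝ × ℝ → ℝ × ℝ,
    ContDiff ℝ (⊤ : ℕ∞) φ ∧ ContDiff ℝ (⊤ : ℕ∞) ψ ∧ φ 0 = 0 ∧ ψ 0 = 0 ∧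
    Function.Bijective (⇑(fderiv ℝ φ 0)) ∧ Function.Bijective (⇑(fderiv ℝ ψ 0)) ∧
    ∀ᶠ p in 𝓝 (0 : ℝ × ℝ), ψ (f (φ p)) = g p

/-- `f` has the form `(x, g(x,y))` where `g` is `C^∞` and the Taylor coefficients of `g`
of total degree `< N` at the origin are prescribed by `P`. -/
def HasForm (f : ℝ × ℝ → ℝ × ℝ) (g : ℝ × ℝ → ℝ) (N : ℕ) (P : ℕ → ℕ → ℝ) : Prop :=
  ContDiff ℝ (⊤ : ℕ∞) g ∧ (∀ p, f p = (p.1, g p)) ∧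
    ∀ i j, i + j < N → tcoeff g i j = P i j

open scoped ContDiff

/-!
For a germ `(x, g(x, y))` of butterfly type the critical set is a smooth curve `x = c(y)`, and
the germ is determined up to `A`-equivalence by the image of that curve: two germs with the same
critical curve and the same critical values differ by a term divisible by `(x - c(y))²`, which an
implicit function argument absorbs into a change of the coordinate `y`. With `a = a₀₆` and
`b = a₀₇`, the image of the critical curve is
`(-5t⁴ - 6at⁵ - 7bt⁶ + ⋯, -4t⁵ - 5at⁶ - 6bt⁷ + ⋯)`,
which coordinate changes bring to `(t⁴, t⁵ + e t⁷)` with `e = -(b - 5a²/8)/4`. Nothing of order at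
least `8` survives: in the second coordinate, the terms of orders `8`, `9`, `10` and `≥ 12` are
functions of the two coordinates lying in `𝔪²`, and the term of order `11` is removed by adding a
multiple of `y²` to the first coordinate and reparametrizing. Replacing `t` by `μ t` multiplies `e`
by `μ²`, and `e` is otherwise an invariant of the curve, so only the sign of `b - 5a²/8` matters.
-/

/-! ### Smooth functions on finite-dimensional spaces -/

section SmoothFunctions

variable {E V : Type*} [NormedAddCommGroup E] [NormedSpace ℝ E] [FiniteDimensional ℝ E]
  [NormedAddCommGroup V] [NormedSpace ℝ V]

lemma hasFDerivAt_parametric_intervalIntegral {F : E × ℝ → V} (hF : ContDiff ℝ 1 F) (x₀ : E) :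
    HasFDerivAt (fun x => ∫ u in (0 : ℝ)..1, F (x, u))
      (∫ u in (0 : ℝ)..1, (fderiv ℝ F (x₀, u)).comp (ContinuousLinearMap.inl ℝ E ℝ)) x₀ := by
  have hF' : Continuous fun p : E × ℝ => (fderiv ℝ F p).comp (ContinuousLinearMap.inl ℝ E ℝ) :=
    (hF.continuous_fderiv one_ne_zero).clm_comp continuous_const
  obtain ⟨C, hC⟩ := ((isCompact_closedBall x₀ 1).prod
    (isCompact_Icc (a := (0 : ℝ)) (b := 1))).exists_bound_of_continuousOn hF'.continuousOn
  refine intervalIntegral.hasFDerivAt_integral_of_dominated_of_fderiv_le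
    (F := fun x u => F (x, u)) (s := Metric.ball x₀ 1) (bound := fun _ => C)
    (F' := fun x u => (fderiv ℝ F (x, u)).comp (ContinuousLinearMap.inl ℝ E ℝ))
    (Metric.ball_mem_nhds x₀ one_pos) ?_ ?_ ?_ ?_ intervalIntegrable_const ?_
  · filter_upwards with x
    exact (hF.continuous.comp (Continuous.prodMk_right x)).aestronglyMeasurable
  · exact (hF.continuous.comp (Continuous.prodMk_right x₀)).intervalIntegrable _ _
  · exact (hF'.comp (Continuous.prodMk_right x₀)).aestronglyMeasurable
  · filter_upwards with u hu x hx
    rw [Set.uIoc_of_le zero_le_one] at hu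
    exact hC (x, u) ⟨Metric.ball_subset_closedBall hx, hu.1.le, hu.2⟩
  · filter_upwards with u _ x _
    exact (hF.differentiable one_ne_zero (x, u)).hasFDerivAt.comp x (hasFDerivAt_prodMk_left x u)

lemma contDiff_nat_parametric_intervalIntegral {F : E × ℝ → V} (n : ℕ) (hF : ContDiff ℝ n F) :
    ContDiff ℝ n fun x => ∫ u in (0 : ℝ)..1, F (x, u) := by
  induction n generalizing F with
  | zero =>
    rw [Nat.cast_zero, contDiff_zero] at hF ⊢
    exact intervalIntegral.continuous_parametric_intervalIntegral_of_continuous'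
      (f := fun x u => F (x, u)) hF 0 1
  | succ n ih =>
    have hdiff := hasFDerivAt_parametric_intervalIntegral (hF.of_le (by norm_cast; omega))
    rw [Nat.cast_succ, contDiff_succ_iff_fderiv_apply]
    refine ⟨fun x => (hdiff x).differentiableAt, by simp, fun v => ?_⟩
    have hF' : ContDiff ℝ n fun p => fderiv ℝ F p (v, 0) :=
      (hF.fderiv_right le_rfl).clm_apply contDiff_const
    convert ih hF' using 2 with x
    rw [(hdiff x).fderiv, ContinuousLinearMap.intervalIntegral_apply]
    · simp
    · exact (((hF.continuous_fderiv (by simp)).comp (Continuous.prodMk_right x)).clm_comp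
        continuous_const).intervalIntegrable _ _

lemma contDiff_infty_parametric_intervalIntegral {F : E × ℝ → V} (hF : ContDiff ℝ ∞ F) :
    ContDiff ℝ ∞ fun x => ∫ u in (0 : ℝ)..1, F (x, u) :=
  contDiff_infty.2 fun n => contDiff_nat_parametric_intervalIntegral n (contDiff_infty.1 hF n)

/-- Hadamard's lemma: `F (x, t) - F (x, 0) = t • ∫₀¹ ∂ₜF (x, ut) du`. -/
lemma exists_eq_add_smul [CompleteSpace V] {F : E × ℝ → V} (hF : ContDiff ℝ ∞ F) :
    ∃ F₁ : E × ℝ → V, ContDiff ℝ ∞ F₁ ∧ (∀ x t, F (x, t) = F (x, 0) + t • F₁ (x, t)) ∧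
      ∀ x, F₁ (x, 0) = fderiv ℝ F (x, 0) (0, 1) := by
  have hF' : ContDiff ℝ ∞ fun p => fderiv ℝ F p (0, 1) :=
    (hF.fderiv_right (by simp)).clm_apply contDiff_const
  refine ⟨fun p => ∫ u in (0 : ℝ)..1, fderiv ℝ F (p.1, u * p.2) (0, 1), ?_, fun x t => ?_, ?_⟩
  · exact contDiff_infty_parametric_intervalIntegral
      (F := fun q : (E × ℝ) × ℝ => fderiv ℝ F (q.1.1, q.2 * q.1.2) (0, 1))
      (hF'.comp (g := fun p => fderiv ℝ F p (0, 1))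
        (f := fun q : (E × ℝ) × ℝ => (q.1.1, q.2 * q.1.2)) (by fun_prop))
  · have hderiv (u : ℝ) : HasDerivAt (fun u : ℝ => F (x, u * t))
        (t • fderiv ℝ F (x, u * t) (0, 1)) u := by
      have hline : HasDerivAt (fun u : ℝ => (x, u * t)) (0, t) u :=
        (hasDerivAt_const u x).prodMk (by simpa using (hasDerivAt_id u).mul_const t)
      have hcomp := (hF.differentiable (by simp) (x, u * t)).hasFDerivAt.comp_hasDerivAt u hline
      rwa [show ((0 : E), t) = t • ((0 : E), (1 : ℝ)) by simp, map_smul] at hcomp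
    have hcont : Continuous fun u : ℝ => t • fderiv ℝ F (x, u * t) (0, 1) :=
      (hF'.continuous.comp (f := fun u : ℝ => (x, u * t)) (by fun_prop)).const_smul t
    have hintegral := intervalIntegral.integral_eq_sub_of_hasDerivAt (fun u _ => hderiv u)
      (hcont.intervalIntegrable 0 1)
    rw [intervalIntegral.integral_smul, one_mul, zero_mul] at hintegral
    rw [hintegral, add_sub_cancel]
  · simp

lemma exists_eq_add_mul {f : ℝ → ℝ} (hf : ContDiff ℝ ∞ f) :
    ∃ f₁ : ℝ → ℝ, ContDiff ℝ ∞ f₁ ∧ (∀ t, f t = f 0 + t * f₁ t) := by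
  obtain ⟨F₁, hF₁, hF, -⟩ := exists_eq_add_smul (F := fun p : ℝ × ℝ => f p.2) (by fun_prop)
  exact ⟨fun t => F₁ (0, t), by fun_prop, fun t => hF 0 t⟩

/-- Multiply by a bump function supported where `f` is smooth. -/
lemma exists_contDiff_eventuallyEq {f : E → V} {a : E} (hf : ∀ᶠ x in 𝓝 a, ContDiffAt ℝ ∞ f x) :
    ∃ F : E → V, ContDiff ℝ ∞ F ∧ F =ᶠ[𝓝 a] f := by
  obtain ⟨r, hr, hball⟩ := Metric.eventually_nhds_iff_ball.1 hf
  let b : ContDiffBump a := ⟨r / 4, r / 2, by positivity, by linarith⟩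
  refine ⟨fun x => b x • f x, contDiff_iff_contDiffAt.2 fun x => ?_, ?_⟩
  · by_cases hx : x ∈ Metric.ball a r
    · exact b.contDiffAt.smul (hball x hx)
    · have hx' : x ∈ (Metric.closedBall a (r / 2))ᶜ := fun h =>
        hx (Metric.closedBall_subset_ball (by linarith) h)
      have hzero : (fun x => b x • f x) =ᶠ[𝓝 x] fun _ => 0 := by
        filter_upwards [Metric.isClosed_closedBall.isOpen_compl.mem_nhds hx'] with y hy
        rw [b.zero_of_le_dist (not_le.1 (mt Metric.mem_closedBall.2 hy)).le, zero_smul]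
      exact contDiffAt_const.congr_of_eventuallyEq hzero
  · filter_upwards [b.eventuallyEq_one] with x hx
    rw [hx, Pi.one_apply, one_smul]

lemma exists_contDiff_eventually_mul_eq_one {m : E → ℝ} {a : E} (hm : ContDiff ℝ ∞ m)
    (ha : m a ≠ 0) : ∃ k : E → ℝ, ContDiff ℝ ∞ k ∧ ∀ᶠ x in 𝓝 a, m x * k x = 1 := by
  have hne : ∀ᶠ x in 𝓝 a, m x ≠ 0 := hm.continuous.continuousAt.eventually_ne ha
  obtain ⟨k, hk, hkm⟩ := exists_contDiff_eventuallyEq (f := fun x => (m x)⁻¹)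
    (hne.mono fun x hx => hm.contDiffAt.inv hx)
  refine ⟨k, hk, ?_⟩
  filter_upwards [hkm, hne] with x hx hx'
  rw [hx, mul_inv_cancel₀ hx']

lemma exists_contDiff_pow_four_eq {m : ℝ → ℝ} (hm : ContDiff ℝ ∞ m) (h0 : m 0 = 1) :
    ∃ w : ℝ → ℝ, ContDiff ℝ ∞ w ∧ w 0 = 1 ∧ ∀ᶠ t in 𝓝 0, w t ^ 4 = m t := by
  have hpos : ∀ᶠ t in 𝓝 0, 0 < m t :=
    hm.continuous.continuousAt.eventually_const_lt (by rw [h0]; exact one_pos)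
  obtain ⟨w, hw, hwm⟩ := exists_contDiff_eventuallyEq (f := fun t => m t ^ (1 / 4 : ℝ))
    (hpos.mono fun t ht => hm.contDiffAt.rpow contDiffAt_const ht.ne')
  refine ⟨w, hw, by simp [hwm.self_of_nhds, h0], ?_⟩
  filter_upwards [hwm, hpos] with t hwt ht
  rw [hwt, ← Real.rpow_natCast, ← Real.rpow_mul ht.le]
  norm_num

end SmoothFunctions

/-! ### Order of vanishing and Taylor expansions in one variable -/

/-- Membership of the germ of `f` at `0` in the `n`-th power `𝔪ⁿ` of the maximal ideal of the
ring of smooth function germs. -/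
def VanishesToOrder (n : ℕ) (f : ℝ → ℝ) : Prop :=
  ∃ r : ℝ → ℝ, ContDiff ℝ ∞ r ∧ ∀ᶠ t in 𝓝 0, f t = t ^ n * r t

lemma deriv_pow_succ_mul {r : ℝ → ℝ} (hr : Differentiable ℝ r) (n : ℕ) (t : ℝ) :
    deriv (fun t => t ^ (n + 1) * r t) t = t ^ n * ((n + 1) * r t + t * deriv r t) := by
  rw [((hasDerivAt_pow (n + 1) t).fun_mul (hr t).hasDerivAt).deriv, add_tsub_cancel_right]
  push_cast
  ring

lemma iteratedDeriv_pow_mul_zero {r : ℝ → ℝ} (hr : ContDiff ℝ ∞ r) (n : ℕ) :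
    iteratedDeriv n (fun t => t ^ n * r t) 0 = n.factorial * r 0 := by
  induction n generalizing r with
  | zero => simp
  | succ n ih =>
    have hderiv : deriv (fun t => t ^ (n + 1) * r t) =
        fun t => t ^ n * ((n + 1) * r t + t * deriv r t) :=
      funext (deriv_pow_succ_mul (hr.differentiable (by simp)) n)
    have : ContDiff ℝ ∞ (deriv r) := (contDiff_infty_iff_deriv.1 hr).2
    rw [iteratedDeriv_succ', hderiv, ih (by fun_prop), Nat.factorial_succ]
    push_cast
    ring

namespace VanishesToOrder

variable {n m : ℕ} {f g : ℝ → ℝ}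

lemma congr (hf : VanishesToOrder n f) (h : g =ᶠ[𝓝 0] f) : VanishesToOrder n g := by
  obtain ⟨r, hr, hfr⟩ := hf
  exact ⟨r, hr, h.trans hfr⟩

lemma zero_order (hf : ContDiff ℝ ∞ f) : VanishesToOrder 0 f :=
  ⟨f, hf, by simp⟩

lemma one_order (hf : ContDiff ℝ ∞ f) (h0 : f 0 = 0) : VanishesToOrder 1 f := by
  obtain ⟨r, hr, hfr⟩ := exists_eq_add_mul hf
  exact ⟨r, hr, .of_forall fun t => by rw [hfr, h0, zero_add, pow_one]⟩

lemma id_pow (n : ℕ) : VanishesToOrder n fun t => t ^ n :=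
  ⟨1, contDiff_const, by simp⟩

lemma add (hf : VanishesToOrder n f) (hg : VanishesToOrder n g) :
    VanishesToOrder n fun t => f t + g t := by
  obtain ⟨r, hr, hfr⟩ := hf
  obtain ⟨s, hs, hgs⟩ := hg
  refine ⟨fun t => r t + s t, hr.add hs, ?_⟩
  filter_upwards [hfr, hgs] with t h₁ h₂
  rw [h₁, h₂, mul_add]

lemma mul (hf : VanishesToOrder n f) (hg : VanishesToOrder m g) :
    VanishesToOrder (n + m) fun t => f t * g t := by
  obtain ⟨r, hr, hfr⟩ := hf
  obtain ⟨s, hs, hgs⟩ := hg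
  refine ⟨fun t => r t * s t, hr.mul hs, ?_⟩
  filter_upwards [hfr, hgs] with t h₁ h₂
  rw [h₁, h₂, pow_add]
  ring

lemma contDiff_mul (hg : ContDiff ℝ ∞ g) (hf : VanishesToOrder n f) :
    VanishesToOrder n fun t => g t * f t := by
  simpa using (zero_order hg).mul hf

lemma neg (hf : VanishesToOrder n f) : VanishesToOrder n fun t => -f t := by
  simpa using contDiff_mul (contDiff_const (c := (-1 : ℝ))) hf

lemma sub (hf : VanishesToOrder n f) (hg : VanishesToOrder n g) :
    VanishesToOrder n fun t => f t - g t := by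
  simpa only [sub_eq_add_neg] using hf.add hg.neg

lemma mono (hf : VanishesToOrder n f) (h : m ≤ n) : VanishesToOrder m f := by
  obtain ⟨k, rfl⟩ := Nat.exists_eq_add_of_le h
  obtain ⟨r, hr, hfr⟩ := hf
  exact ⟨fun t => t ^ k * r t, by fun_prop, hfr.mono fun t ht => by rw [ht, pow_add, mul_assoc]⟩

lemma pow (hf : VanishesToOrder n f) (k : ℕ) : VanishesToOrder (n * k) fun t => f t ^ k := by
  obtain ⟨r, hr, hfr⟩ := hf
  exact ⟨fun t => r t ^ k, hr.pow k, hfr.mono fun t ht => by simp only [ht, mul_pow, pow_mul]⟩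

lemma of_pow_mul (hf : ContDiff ℝ ∞ f) (h : VanishesToOrder (n + m) fun t => t ^ n * f t) :
    VanishesToOrder m f := by
  obtain ⟨r, hr, hfr⟩ := h
  refine ⟨r, hr, ?_⟩
  have hpunct : ∀ᶠ t in 𝓝[≠] (0 : ℝ), f t = t ^ m * r t := by
    filter_upwards [hfr.filter_mono nhdsWithin_le_nhds, self_mem_nhdsWithin] with t ht ht0
    rw [pow_add, mul_assoc] at ht
    exact mul_left_cancel₀ (pow_ne_zero n ht0) ht
  exact (hf.continuous.continuousAt.eventuallyEq_nhds_iff_eventuallyEq_nhdsNE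
    (by have := hr.continuous; fun_prop)).1 hpunct

lemma apply_zero (hf : VanishesToOrder (n + 1) f) : f 0 = 0 := by
  obtain ⟨r, -, hfr⟩ := hf
  simp [hfr.self_of_nhds]

lemma isBigO (hf : VanishesToOrder n f) : f =O[𝓝 0] fun t => t ^ n := by
  obtain ⟨r, hr, hfr⟩ := hf
  have hr₁ : r =O[𝓝 0] fun _ => (1 : ℝ) := (hr.continuous.tendsto 0).isBigO_one ℝ
  simpa using EventuallyEq.trans_isBigO hfr ((Asymptotics.isBigO_refl (fun t => t ^ n) _).mul hr₁)

lemma comp {θ : ℝ → ℝ} (hf : VanishesToOrder n f) (hθ : ContDiff ℝ ∞ θ)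
    (hθm : VanishesToOrder (m + 1) θ) : VanishesToOrder ((m + 1) * n) fun t => f (θ t) := by
  obtain ⟨r, hr, hfr⟩ := hf
  have hlim : Tendsto θ (𝓝 0) (𝓝 0) := hθ.continuous.tendsto' 0 0 hθm.apply_zero
  refine ((hθm.pow n).mul (zero_order (f := fun t => r (θ t)) (by fun_prop))).congr ?_
  exact hlim.eventually hfr

lemma deriv (hf : VanishesToOrder (n + 1) f) : VanishesToOrder n (deriv f) := by
  obtain ⟨r, hr, hfr⟩ := hf
  have : ContDiff ℝ ∞ (_root_.deriv r) := (contDiff_infty_iff_deriv.1 hr).2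
  refine ⟨fun t => (n + 1) * r t + t * _root_.deriv r t, by fun_prop, ?_⟩
  filter_upwards [eventually_eventually_nhds.2 hfr] with t ht
  rw [EventuallyEq.deriv_eq ht, deriv_pow_succ_mul (hr.differentiable (by simp))]

lemma iteratedDeriv_eq_zero (hf : VanishesToOrder n f) {i : ℕ} (hi : i < n) :
    iteratedDeriv i f 0 = 0 := by
  obtain ⟨k, rfl⟩ := Nat.exists_eq_add_of_lt hi
  obtain ⟨r, hr, hfr⟩ := hf
  have hfr' : f =ᶠ[𝓝 0] fun t => t ^ i * (t ^ (k + 1) * r t) :=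
    hfr.mono fun t ht => by rw [ht]; ring
  rw [hfr'.iteratedDeriv_eq, iteratedDeriv_pow_mul_zero (by fun_prop)]
  simp

lemma pow_sub_pow (hf : ContDiff ℝ ∞ f) (hg : ContDiff ℝ ∞ g)
    (h : VanishesToOrder n fun t => f t - g t) (k : ℕ) :
    VanishesToOrder n fun t => f t ^ k - g t ^ k := by
  refine (contDiff_mul (g := fun t => ∑ i ∈ Finset.range k, f t ^ i * g t ^ (k - 1 - i))
    (by fun_prop) h).congr (.of_forall fun t => ?_)
  exact (geom_sum₂_mul (f t) (g t) k).symm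

lemma of_pow_sub_pow (hf : ContDiff ℝ ∞ f) (hg : ContDiff ℝ ∞ g) (h0 : f 0 = g 0) (hg0 : g 0 ≠ 0)
    {k : ℕ} (hk : k ≠ 0) (h : VanishesToOrder n fun t => f t ^ k - g t ^ k) :
    VanishesToOrder n fun t => f t - g t := by
  obtain ⟨u, hu, hmul⟩ := exists_contDiff_eventually_mul_eq_one
    (m := fun t => ∑ i ∈ Finset.range k, f t ^ i * g t ^ (k - 1 - i)) (a := 0) (by fun_prop)
    (by simp only [h0, geom_sum₂_self]; positivity)
  refine (contDiff_mul hu h).congr ?_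
  filter_upwards [hmul] with t ht
  rw [← geom_sum₂_mul (f t) (g t) k]
  linear_combination -(f t - g t) * ht

end VanishesToOrder

lemma vanishesToOrder_of_iteratedDeriv_eq_zero {f : ℝ → ℝ} (hf : ContDiff ℝ ∞ f) {n : ℕ}
    (h : ∀ i < n, iteratedDeriv i f 0 = 0) : VanishesToOrder n f := by
  induction n with
  | zero => exact .zero_order hf
  | succ n ih =>
    obtain ⟨r, hr, hfr⟩ := ih fun i hi => h i (hi.trans n.lt_succ_self)
    have hr0 : r 0 = 0 := by
      have hn := h n n.lt_succ_self
      rw [EventuallyEq.iteratedDeriv_eq n hfr, iteratedDeriv_pow_mul_zero hr] at hn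
      exact (mul_eq_zero.1 hn).resolve_left (mod_cast n.factorial_ne_zero)
    exact ((VanishesToOrder.id_pow n).mul (.one_order hr hr0)).congr hfr

lemma iteratedDeriv_sum_pow_zero (c : ℕ → ℝ) {i n : ℕ} (hi : i < n) :
    iteratedDeriv i (fun t : ℝ => ∑ j ∈ Finset.range n, c j * t ^ j) 0 = i.factorial * c i := by
  rw [iteratedDeriv_fun_sum fun j _ => by fun_prop, Finset.sum_eq_single i]
  · simp [Nat.descFactorial_self, mul_comm]
  · intro j _ hj
    have : j < i ∨ j - i ≠ 0 := by omega
    simp [this]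
  · simp [hi]

lemma vanishesToOrder_sub_taylor {f : ℝ → ℝ} (hf : ContDiff ℝ ∞ f) (n : ℕ) :
    VanishesToOrder n fun t =>
      f t - ∑ i ∈ Finset.range n, iteratedDeriv i f 0 / i.factorial * t ^ i := by
  refine vanishesToOrder_of_iteratedDeriv_eq_zero (by fun_prop) fun i hi => ?_
  rw [iteratedDeriv_fun_sub (hf.contDiffAt.of_le (by exact_mod_cast le_top)) (by fun_prop),
    iteratedDeriv_sum_pow_zero _ hi, mul_div_cancel₀ _ (mod_cast i.factorial_ne_zero), sub_self]

/-! ### Borel's lemma and even functions -/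

lemma exists_bound_iteratedDeriv_of_hasCompactSupport {φ : ℝ → ℝ} (hφ : ContDiff ℝ ∞ φ)
    (hsupp : HasCompactSupport φ) (n : ℕ) :
    ∃ M, ∀ k < n, ∀ t, ‖iteratedDeriv k φ t‖ ≤ M := by
  have hbound (k : ℕ) : ∃ C, ∀ t, ‖iteratedFDeriv ℝ k φ t‖ ≤ C :=
    (hφ.continuous_iteratedFDeriv (by exact_mod_cast le_top)).bounded_above_of_compact_support
      (hsupp.iteratedFDeriv k)
  choose C hC using hbound
  have hC₀ (k : ℕ) : 0 ≤ C k := (norm_nonneg _).trans (hC k 0)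
  refine ⟨∑ k ∈ Finset.range n, C k, fun k hk t => ?_⟩
  rw [← norm_iteratedFDeriv_eq_norm_iteratedDeriv]
  exact (hC k t).trans (Finset.single_le_sum (fun j _ => hC₀ j) (Finset.mem_range.2 hk))

/-- The germ is that of a rescaled cut-off monomial `c L⁻ⁿ φ (L t)` with `φ s = sⁿ χ s`: its
`k`-th derivative is `O(L ^ (k - n))`, hence small for `k < n` when `L` is large. -/
lemma exists_eventuallyEq_monomial_iteratedFDeriv_le (c : ℝ) (n : ℕ) {ε : ℝ} (hε : 0 < ε) :
    ∃ f : ℝ → ℝ, ContDiff ℝ ∞ f ∧ f =ᶠ[𝓝 0] (fun t => c * t ^ n) ∧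
      ∀ k < n, ∀ t, ‖iteratedFDeriv ℝ k f t‖ ≤ ε := by
  let χ : ContDiffBump (0 : ℝ) := ⟨1, 2, one_pos, one_lt_two⟩
  let φ : ℝ → ℝ := fun s => s ^ n * χ s
  have hφ : ContDiff ℝ ∞ φ := (contDiff_id.pow n).mul χ.contDiff
  obtain ⟨M, hM⟩ :=
    exists_bound_iteratedDeriv_of_hasCompactSupport hφ χ.hasCompactSupport.mul_left n
  obtain ⟨L, hL₁, hL⟩ : ∃ L, 1 ≤ L ∧ |c| * M ≤ ε * L :=
    ⟨max 1 (|c| * M / ε), le_max_left .., (div_le_iff₀' hε).1 (le_max_right ..)⟩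
  have hL₀ : 0 < L := one_pos.trans_le hL₁
  refine ⟨fun t => c * (L ^ n)⁻¹ * φ (L * t), by fun_prop, ?_, fun k hk t => ?_⟩
  · have hlim : Tendsto (fun t => L * t) (𝓝 0) (𝓝 0) := by
      simpa using (continuous_const_mul L).tendsto (0 : ℝ)
    filter_upwards [hlim.eventually χ.eventuallyEq_one] with t ht
    simp only [φ, ht, Pi.one_apply, mul_one, mul_pow]
    field_simp
  · have hscale : L ^ k * L ≤ L ^ n := by
      rw [← pow_succ]
      exact pow_le_pow_right₀ hL₁ hk
    rw [norm_iteratedFDeriv_eq_norm_iteratedDeriv, iteratedDeriv_const_mul_field,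
      iteratedDeriv_comp_const_mul (hφ.of_le (by exact_mod_cast le_top))]
    simp only [norm_mul, norm_inv, norm_pow, Real.norm_eq_abs, abs_of_pos hL₀]
    calc |c| * (L ^ n)⁻¹ * (L ^ k * |iteratedDeriv k φ (L * t)|)
        ≤ |c| * (L ^ n)⁻¹ * (L ^ k * M) := by gcongr; exact hM k hk _
      _ = |c| * M * L ^ k * (L ^ n)⁻¹ := by ring
      _ ≤ ε * L * L ^ k * (L ^ n)⁻¹ := by gcongr
      _ = ε * (L ^ k * L * (L ^ n)⁻¹) := by ring
      _ ≤ ε * 1 := by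
        gcongr
        exact (mul_inv_le_iff₀ (by positivity)).2 (by rwa [one_mul])
      _ = ε := mul_one ε

/-- Borel's lemma. -/
lemma exists_contDiff_taylor_eq (c : ℕ → ℝ) :
    ∃ F : ℝ → ℝ, ContDiff ℝ ∞ F ∧
      ∀ n, VanishesToOrder n fun t => F t - ∑ i ∈ Finset.range n, c i * t ^ i := by
  choose f hf hfc hbound using fun n =>
    exists_eventuallyEq_monomial_iteratedFDeriv_le (c n) n (ε := (1 / 2) ^ n) (by positivity)
  have hsummable (t : ℝ) : Summable fun n => f n t := by
    refine .of_norm_bounded_eventually_nat summable_geometric_two ?_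
    filter_upwards [eventually_gt_atTop 0] with n hn
    simpa [norm_iteratedFDeriv_eq_norm_iteratedDeriv] using hbound n 0 hn t
  have hF : ContDiff ℝ ∞ fun t => ∑' n, f n t := by
    refine contDiff_tsum_of_eventually (v := fun _ n => (1 / 2) ^ n) (fun n => hf n)
      (fun _ _ => summable_geometric_two) fun k _ => ?_
    rw [Nat.cofinite_eq_atTop]
    filter_upwards [eventually_gt_atTop k] with n hn using hbound n k hn
  refine ⟨fun t => ∑' n, f n t, hF, fun n => ?_⟩
  have htail : (fun t => ∑' i, f (i + n) t) =
      fun t => (∑' i, f i t) - ∑ i ∈ Finset.range n, f i t :=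
    funext fun t => eq_sub_of_add_eq' ((hsummable t).sum_add_tsum_nat_add n)
  have htail_vanishes : VanishesToOrder n fun t => ∑' i, f (i + n) t := by
    refine vanishesToOrder_of_iteratedDeriv_eq_zero ?_ fun k hk => ?_
    · rw [htail]
      exact hF.sub (ContDiff.sum fun i _ => hf i)
    · have hzero (i : ℕ) : iteratedFDeriv ℝ k (f (i + n)) 0 = 0 := by
        rw [← norm_eq_zero, norm_iteratedFDeriv_eq_norm_iteratedDeriv, norm_eq_zero]
        have hmono : VanishesToOrder (i + n) fun t => c (i + n) * t ^ (i + n) :=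
          .contDiff_mul contDiff_const (.id_pow _)
        exact (hmono.congr (hfc _)).iteratedDeriv_eq_zero (by omega)
      rw [iteratedDeriv_eq_iteratedFDeriv, iteratedFDeriv_tsum_apply (N := k)
        (v := fun _ i => (1 / 2) ^ (i + n)) (fun i => (hf _).of_le (by exact_mod_cast le_top))
        (fun _ _ => (summable_nat_add_iff n).2 summable_geometric_two)
        (fun j i t hj => hbound _ j ((Nat.cast_le.1 hj).trans_lt (by omega)) t) le_rfl]
      simp [hzero]
  refine htail_vanishes.congr ?_
  filter_upwards [(Filter.eventually_all_finset (Finset.range n)).2 fun i _ => hfc i] with t ht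
  rw [congrFun htail t, Finset.sum_congr rfl ht]

/-- A flat `f` has derivative `2 t * g t` with `g` flat, so the derivative of `s ↦ f √s` is
`s ↦ g √s`, which is of the same form. Recall that `√s = 0` for `s < 0`. -/
lemma exists_hasDerivAt_comp_sqrt {f : ℝ → ℝ} (hf : ContDiff ℝ ∞ f)
    (hflat : ∀ n, VanishesToOrder n f) :
    ∃ g : ℝ → ℝ, ContDiff ℝ ∞ g ∧ (∀ n, VanishesToOrder n g) ∧
      ∀ s, HasDerivAt (fun s => f √s) (g √s) s := by
  have hf' : ContDiff ℝ ∞ (deriv f) := (contDiff_infty_iff_deriv.1 hf).2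
  obtain ⟨g, hg, hfg⟩ := exists_eq_add_mul hf'
  have hfg' (t : ℝ) : deriv f t = t * g t := by
    rw [hfg, (hflat 2).deriv.apply_zero, zero_add]
  have hg_flat (n : ℕ) : VanishesToOrder n g :=
    .of_pow_mul (n := 1) hg
      (by simpa [← hfg', add_comm 1 n] using (hflat (n + 2)).deriv.mono (by omega))
  refine ⟨fun t => 2⁻¹ * g t, by fun_prop, fun n => .contDiff_mul contDiff_const (hg_flat n),
    fun s => ?_⟩
  have hf0 : f 0 = 0 := (hflat 1).apply_zero
  rcases lt_trichotomy s 0 with hs | rfl | hs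
  · simp only [Real.sqrt_eq_zero_of_nonpos hs.le, (hg_flat 1).apply_zero, mul_zero]
    refine (hasDerivAt_const s 0).congr_of_eventuallyEq ?_
    filter_upwards [gt_mem_nhds hs] with x hx
    rw [Real.sqrt_eq_zero_of_nonpos hx.le, hf0]
  · simp only [Real.sqrt_zero, (hg_flat 1).apply_zero, mul_zero]
    have hsqrt : Tendsto (fun h : ℝ => √h) (𝓝 0) (𝓝 0) := by
      simpa using Real.continuous_sqrt.tendsto 0
    have hsq : (fun h : ℝ => √h ^ 4) =O[𝓝 0] fun h => ‖h - 0‖ ^ 2 := by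
      refine .of_bound' (.of_forall fun h => ?_)
      have hle : √h ^ 2 ≤ |h| := by
        rcases le_total 0 h with hh | hh
        · rw [Real.sq_sqrt hh, abs_of_nonneg hh]
        · simp [Real.sqrt_eq_zero_of_nonpos hh]
      simpa [← pow_mul, abs_of_nonneg (Real.sqrt_nonneg h)] using
        pow_le_pow_left₀ (sq_nonneg √h) hle 2
    exact ((((hflat 4).isBigO).comp_tendsto hsqrt).trans hsq).hasFDerivAt one_lt_two |>.hasDerivAt
  · have hcomp := (hf.differentiable (by simp) √s).hasDerivAt.comp s (Real.hasDerivAt_sqrt hs.ne')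
    refine hcomp.congr_deriv ?_
    rw [hfg']
    have := (Real.sqrt_pos.2 hs).ne'
    field_simp

lemma contDiff_comp_sqrt_of_flat {f : ℝ → ℝ} (hf : ContDiff ℝ ∞ f)
    (hflat : ∀ n, VanishesToOrder n f) : ContDiff ℝ ∞ fun s => f √s := by
  refine contDiff_infty.2 fun n => ?_
  induction n generalizing f with
  | zero => exact contDiff_zero.2 (hf.continuous.comp Real.continuous_sqrt)
  | succ n ih =>
    obtain ⟨g, hg, hg_flat, hderiv⟩ := exists_hasDerivAt_comp_sqrt hf hflat
    rw [Nat.cast_succ, contDiff_succ_iff_deriv]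
    refine ⟨fun s => (hderiv s).differentiableAt, by simp, ?_⟩
    rw [funext fun s => (hderiv s).deriv]
    exact ih hg hg_flat

/-- Whitney's theorem on even functions. -/
lemma exists_contDiff_comp_sq_of_even {f : ℝ → ℝ} (hf : ContDiff ℝ ∞ f)
    (heven : ∀ t, f (-t) = f t) : ∃ g : ℝ → ℝ, ContDiff ℝ ∞ g ∧ ∀ t, f t = g (t ^ 2) := by
  obtain ⟨F, hF, hF_taylor⟩ :=
    exists_contDiff_taylor_eq fun i => iteratedDeriv (2 * i) f 0 / (2 * i).factorial
  have hodd (i : ℕ) : iteratedDeriv (2 * i + 1) f 0 = 0 := by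
    have := iteratedDeriv_comp_neg (2 * i + 1) f 0
    simp only [heven, neg_zero, pow_succ, pow_mul] at this
    norm_num at this
    linarith
  have hsum (n : ℕ) (t : ℝ) :
      ∑ i ∈ Finset.range (2 * n), iteratedDeriv i f 0 / i.factorial * t ^ i =
        ∑ i ∈ Finset.range n, iteratedDeriv (2 * i) f 0 / (2 * i).factorial * (t ^ 2) ^ i := by
    induction n with
    | zero => rfl
    | succ n ih =>
      rw [mul_add, mul_one, Finset.sum_range_succ, Finset.sum_range_succ, ih,
        Finset.sum_range_succ, hodd, pow_mul]
      simp
  have hflat (n : ℕ) : VanishesToOrder n fun t => f t - F (t ^ 2) := by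
    have h := (vanishesToOrder_sub_taylor hf (2 * n)).sub
      ((hF_taylor n).comp (θ := fun t => t ^ 2) (by fun_prop) (.id_pow 2))
    simp only [hsum, sub_sub_sub_cancel_right] at h
    exact h.mono (by omega)
  refine ⟨fun s => f √s - F (√s ^ 2) + F s,
    (contDiff_comp_sqrt_of_flat (f := fun t => f t - F (t ^ 2)) (by fun_prop) hflat).add hF,
    fun t => ?_⟩
  have habs : f |t| = f t := by rcases abs_choice t with h | h <;> simp [h, heven]
  simp [Real.sqrt_sq_eq_abs, habs]

lemma exists_contDiff_even_odd_decomposition {f : ℝ → ℝ} (hf : ContDiff ℝ ∞ f) :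
    ∃ a b : ℝ → ℝ, ContDiff ℝ ∞ a ∧ ContDiff ℝ ∞ b ∧ ∀ t, f t = a (t ^ 2) + t * b (t ^ 2) := by
  obtain ⟨a, ha, ha_eq⟩ := exists_contDiff_comp_sq_of_even (f := fun t => (f t + f (-t)) / 2)
    (by fun_prop) fun t => by rw [neg_neg, add_comm]
  obtain ⟨o, ho, ho_eq⟩ := exists_eq_add_mul (f := fun t => (f t - f (-t)) / 2) (by fun_prop)
  have ho_eq' (t : ℝ) : (f t - f (-t)) / 2 = t * o t := by simpa using ho_eq t
  have ho_even (t : ℝ) : o (-t) = o t := by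
    rcases eq_or_ne t 0 with rfl | ht
    · rw [neg_zero]
    · refine mul_left_cancel₀ ht ?_
      have hneg := ho_eq' (-t)
      rw [neg_neg] at hneg
      linear_combination hneg + ho_eq' t
  obtain ⟨b, hb, hb_eq⟩ := exists_contDiff_comp_sq_of_even ho ho_even
  exact ⟨a, b, ha, hb, fun t => by rw [← ha_eq, ← hb_eq, ← ho_eq']; ring⟩

lemma exists_contDiff_decomposition_mod_four {f : ℝ → ℝ} (hf : ContDiff ℝ ∞ f) :
    ∃ a b c d : ℝ → ℝ, ContDiff ℝ ∞ a ∧ ContDiff ℝ ∞ b ∧ ContDiff ℝ ∞ c ∧ ContDiff ℝ ∞ d ∧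
      ∀ t, f t = a (t ^ 4) + t * b (t ^ 4) + t ^ 2 * c (t ^ 4) + t ^ 3 * d (t ^ 4) := by
  obtain ⟨p, q, hp, hq, hf_eq⟩ := exists_contDiff_even_odd_decomposition hf
  obtain ⟨a, c, ha, hc, hp_eq⟩ := exists_contDiff_even_odd_decomposition hp
  obtain ⟨b, d, hb, hd, hq_eq⟩ := exists_contDiff_even_odd_decomposition hq
  refine ⟨a, b, c, d, ha, hb, hc, hd, fun t => ?_⟩
  rw [hf_eq, hp_eq, hq_eq, ← pow_mul]
  ring

/-! ### Diffeomorphism germs and implicit functions -/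

/-- A smooth map fixing the origin whose germ there is a diffeomorphism germ. -/
structure IsDiffeoGerm {E : Type*} [NormedAddCommGroup E] [NormedSpace ℝ E] (φ : E → E) :
    Prop where
  contDiff : ContDiff ℝ ∞ φ
  map_zero : φ 0 = 0
  bijective_fderiv : Function.Bijective (fderiv ℝ φ 0)

namespace IsDiffeoGerm

section

variable {E : Type*} [NormedAddCommGroup E] [NormedSpace ℝ E] {φ ψ : E → E}

lemma tendsto (hφ : IsDiffeoGerm φ) : Tendsto φ (𝓝 0) (𝓝 0) :=
  hφ.contDiff.continuous.tendsto' 0 0 hφ.map_zero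

lemma comp (hψ : IsDiffeoGerm ψ) (hφ : IsDiffeoGerm φ) : IsDiffeoGerm (ψ ∘ φ) where
  contDiff := hψ.contDiff.comp hφ.contDiff
  map_zero := by rw [Function.comp_apply, hφ.map_zero, hψ.map_zero]
  bijective_fderiv := by
    rw [fderiv_comp 0 (hψ.contDiff.differentiable (by simp) _)
      (hφ.contDiff.differentiable (by simp) _), hφ.map_zero]
    exact hψ.bijective_fderiv.comp hφ.bijective_fderiv

variable [FiniteDimensional ℝ E]

lemma of_injective (hφ : ContDiff ℝ ∞ φ) (h0 : φ 0 = 0)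
    (hinj : Function.Injective (fderiv ℝ φ 0)) : IsDiffeoGerm φ :=
  ⟨hφ, h0, hinj, (fderiv ℝ φ 0).toLinearMap.injective_iff_surjective.1 hinj⟩

/-- The pointwise inverse function theorem gives an inverse that is smooth near `0` because the
derivative stays invertible there; it is then extended to all of `E`. -/
lemma exists_inverse (hφ : IsDiffeoGerm φ) :
    ∃ θ : E → E, IsDiffeoGerm θ ∧ (∀ᶠ x in 𝓝 0, θ (φ x) = x) ∧ ∀ᶠ y in 𝓝 0, φ (θ y) = y := by
  have : CompleteSpace E := FiniteDimensional.complete ℝ E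
  have hdiff := hφ.contDiff.differentiable (by simp)
  let L : E ≃L[ℝ] E := .ofBijective (fderiv ℝ φ 0)
    (LinearMap.ker_eq_bot.2 hφ.bijective_fderiv.1) (LinearMap.range_eq_top.2 hφ.bijective_fderiv.2)
  have hL : HasFDerivAt φ (L : E →L[ℝ] E) 0 := (hdiff 0).hasFDerivAt
  let e := hφ.contDiff.contDiffAt.toOpenPartialHomeomorph φ hL (by simp)
  have hsource : 0 ∈ e.source :=
    hφ.contDiff.contDiffAt.mem_toOpenPartialHomeomorph_source hL (by simp)
  have hφe : e 0 = 0 := hφ.map_zero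
  have htarget : 0 ∈ e.target := by simpa only [hφe] using e.map_source hsource
  have hsymm0 : e.symm 0 = 0 := by simpa only [hφe] using e.left_inv hsource
  have hinvertible : ∀ᶠ x in 𝓝 0, ∃ L' : E ≃L[ℝ] E, (L' : E →L[ℝ] E) = fderiv ℝ φ x :=
    (hφ.contDiff.continuous_fderiv (by simp)).continuousAt.eventually_mem
      (ContinuousLinearEquiv.nhds L)
  have hsmooth : ∀ᶠ y in 𝓝 0, ContDiffAt ℝ ∞ e.symm y := by
    have hlim : Tendsto e.symm (𝓝 0) (𝓝 0) := by
      simpa only [ContinuousAt, hsymm0] using e.continuousAt_symm htarget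
    filter_upwards [hlim.eventually hinvertible, e.open_target.mem_nhds htarget]
      with y ⟨L', hL'⟩ hy
    exact e.contDiffAt_symm (f₀' := L') hy (hL' ▸ (hdiff _).hasFDerivAt) hφ.contDiff.contDiffAt
  obtain ⟨θ, hθ, hθe⟩ := exists_contDiff_eventuallyEq hsmooth
  have hleft : ∀ᶠ x in 𝓝 0, θ (φ x) = x := by
    filter_upwards [hφ.tendsto.eventually hθe, e.open_source.mem_nhds hsource] with x hx hx'
    exact hx.trans (e.left_inv hx')
  refine ⟨θ, ⟨hθ, hθe.self_of_nhds.trans hsymm0, ?_⟩, hleft, ?_⟩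
  · rw [← Function.Bijective.of_comp_iff _ hφ.bijective_fderiv, ← ContinuousLinearMap.coe_comp]
    have hcomp := fderiv_comp 0 (hθ.differentiable (by simp) (φ 0)) (hdiff 0)
    rw [hφ.map_zero] at hcomp
    rw [← hcomp, EventuallyEq.fderiv_eq (f₁ := θ ∘ φ) (f := id) hleft, fderiv_id]
    exact Function.bijective_id
  · filter_upwards [hθe, e.open_target.mem_nhds htarget] with y hy hy'
    rw [hy]
    exact e.right_inv hy'

end

variable {φ : ℝ → ℝ}

lemma of_deriv_ne_zero (hφ : ContDiff ℝ ∞ φ) (h0 : φ 0 = 0) (h : deriv φ 0 ≠ 0) :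
    IsDiffeoGerm φ := by
  refine of_injective hφ h0 fun s t hst => ?_
  simpa [fderiv_eq_smul_deriv, h] using hst

lemma deriv_ne_zero (hφ : IsDiffeoGerm φ) : deriv φ 0 ≠ 0 := fun h => by
  simpa using hφ.bijective_fderiv.1 (a₁ := 1) (a₂ := 0) (by simp [h])

lemma exists_eq_mul (hφ : IsDiffeoGerm φ) :
    ∃ w : ℝ → ℝ, ContDiff ℝ ∞ w ∧ w 0 ≠ 0 ∧ ∀ t, φ t = t * w t := by
  obtain ⟨w, hw, hφw⟩ := exists_eq_add_mul hφ.contDiff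
  simp only [hφ.map_zero, zero_add] at hφw
  have hderiv := (hasDerivAt_id' (0 : ℝ)).fun_mul (hw.differentiable (by simp) 0).hasDerivAt
  refine ⟨w, hw, ?_, hφw⟩
  simpa [show φ = _ from funext hφw, hderiv.deriv] using hφ.deriv_ne_zero

end IsDiffeoGerm

/-- The implicit function is read off the inverse of `(p, s) ↦ (p, Q (p, s))`. -/
lemma exists_contDiff_eventually_eq_zero_iff {E : Type*} [NormedAddCommGroup E] [NormedSpace ℝ E]
    [FiniteDimensional ℝ E] {Q : E × ℝ → ℝ} (hQ : ContDiff ℝ ∞ Q) (h0 : Q 0 = 0)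
    (h0' : fderiv ℝ Q 0 (0, 1) ≠ 0) :
    ∃ w : E → ℝ, ContDiff ℝ ∞ w ∧ w 0 = 0 ∧ ∀ᶠ q : E × ℝ in 𝓝 0, Q q = 0 ↔ q.2 = w q.1 := by
  have hΦ : IsDiffeoGerm fun q : E × ℝ => (q.1, Q q) := by
    refine .of_injective (by fun_prop) (by simp [h0])
      ((injective_iff_map_eq_zero _).2 fun v hv => ?_)
    have hderiv := hasFDerivAt_fst.prodMk (hQ.differentiable (by simp) (0 : E × ℝ)).hasFDerivAt
    rw [hderiv.fderiv, ContinuousLinearMap.prod_apply, Prod.mk_eq_zero] at hv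
    obtain ⟨hv₁, hv₂⟩ := hv
    have hv_eq : v = v.2 • ((0 : E), (1 : ℝ)) := Prod.ext (by simpa using hv₁) (by simp)
    rw [hv_eq, map_smul, smul_eq_mul] at hv₂
    rw [hv_eq, (mul_eq_zero.1 hv₂).resolve_right h0', zero_smul]
  obtain ⟨θ, hθ, hleft, hright⟩ := hΦ.exists_inverse
  have hθ_contDiff := hθ.contDiff
  refine ⟨fun p => (θ (p, 0)).2, by fun_prop, congrArg Prod.snd hθ.map_zero, ?_⟩
  have hlim : Tendsto (fun q : E × ℝ => (q.1, (0 : ℝ))) (𝓝 0) (𝓝 0) :=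
    (by fun_prop : Continuous fun q : E × ℝ => (q.1, (0 : ℝ))).tendsto' 0 0 rfl
  filter_upwards [hleft, hlim.eventually hright] with q hq hq'
  rw [Prod.mk.injEq] at hq'
  constructor
  · intro hQq
    rw [← hQq, hq]
  · intro hw
    have hθq : θ (q.1, 0) = q := Prod.ext hq'.1 hw.symm
    rw [← hθq, hq'.2]

/-! ### Equivalence of plane curve germs and the curves `(t⁴, t⁵ + e t⁷)` -/

/-- A smooth function on the plane lying in the square of the maximal ideal of germs at `0`. -/
structure IsQuadraticGerm (Q : ℝ × ℝ → ℝ) : Prop where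
  contDiff : ContDiff ℝ ∞ Q
  map_zero : Q 0 = 0
  fderiv_zero : fderiv ℝ Q 0 = 0

namespace IsQuadraticGerm

lemma zero : IsQuadraticGerm fun _ => 0 :=
  ⟨contDiff_const, rfl, by simp⟩

lemma mul {U V : ℝ × ℝ → ℝ} (hU : ContDiff ℝ ∞ U) (hV : ContDiff ℝ ∞ V) (hU0 : U 0 = 0)
    (hV0 : V 0 = 0) : IsQuadraticGerm fun p => U p * V p where
  contDiff := hU.mul hV
  map_zero := by rw [hU0, zero_mul]
  fderiv_zero := by
    rw [fderiv_fun_mul (hU.differentiable (by simp) 0) (hV.differentiable (by simp) 0), hU0, hV0,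
      zero_smul, zero_smul, add_zero]

lemma add {Q R : ℝ × ℝ → ℝ} (hQ : IsQuadraticGerm Q) (hR : IsQuadraticGerm R) :
    IsQuadraticGerm fun p => Q p + R p where
  contDiff := hQ.contDiff.add hR.contDiff
  map_zero := by rw [hQ.map_zero, hR.map_zero, add_zero]
  fderiv_zero := by
    rw [fderiv_fun_add (hQ.contDiff.differentiable (by simp) 0)
      (hR.contDiff.differentiable (by simp) 0), hQ.fderiv_zero, hR.fderiv_zero, add_zero]

end IsQuadraticGerm

lemma hasFDerivAt_triangular {Q R : ℝ × ℝ → ℝ} (A B D : ℝ) (hQ : IsQuadraticGerm Q)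
    (hR : IsQuadraticGerm R) :
    HasFDerivAt (fun p : ℝ × ℝ => (A * p.1 + B * p.2 + Q p, D * p.2 + R p))
      ((A • ContinuousLinearMap.fst ℝ ℝ ℝ + B • ContinuousLinearMap.snd ℝ ℝ ℝ).prod
        (D • ContinuousLinearMap.snd ℝ ℝ ℝ)) 0 := by
  have hQ' := (hQ.contDiff.differentiable (by simp) 0).hasFDerivAt
  have hR' := (hR.contDiff.differentiable (by simp) 0).hasFDerivAt
  rw [hQ.fderiv_zero] at hQ'
  rw [hR.fderiv_zero] at hR'
  have h₁ := ((hasFDerivAt_fst.const_mul A).fun_add (hasFDerivAt_snd.const_mul B)).fun_add hQ'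
  have h₂ := (hasFDerivAt_snd.const_mul D).fun_add hR'
  rw [add_zero] at h₁ h₂
  exact h₁.prodMk h₂

lemma isDiffeoGerm_triangular {A D : ℝ} (B : ℝ) (hA : A ≠ 0) (hD : D ≠ 0) {Q R : ℝ × ℝ → ℝ}
    (hQ : IsQuadraticGerm Q) (hR : IsQuadraticGerm R) :
    IsDiffeoGerm fun p : ℝ × ℝ => (A * p.1 + B * p.2 + Q p, D * p.2 + R p) := by
  have hQs := hQ.contDiff
  have hRs := hR.contDiff
  refine .of_injective (by fun_prop) (by simp [hQ.map_zero, hR.map_zero])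
    ((injective_iff_map_eq_zero _).2 fun v hv => ?_)
  rw [(hasFDerivAt_triangular A B D hQ hR).fderiv] at hv
  have hv₂ : v.2 = 0 := by simpa [hD] using congrArg Prod.snd hv
  have hv₁ : v.1 = 0 := by simpa [hA, hv₂] using congrArg Prod.fst hv
  exact Prod.ext hv₁ hv₂

/-- Equivalence of plane curve germs under reparametrization and diffeomorphism germs of the
target whose derivative at the origin preserves the first coordinate axis. -/
def CurveEquiv (γ γ' : ℝ → ℝ × ℝ) : Prop :=
  ∃ (ψ : ℝ × ℝ → ℝ × ℝ) (τ : ℝ → ℝ), IsDiffeoGerm ψ ∧ IsDiffeoGerm τ ∧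
    (fderiv ℝ ψ 0 (1, 0)).2 = 0 ∧ ∀ᶠ t in 𝓝 0, ψ (γ (τ t)) = γ' t

namespace CurveEquiv

variable {γ γ' γ'' : ℝ → ℝ × ℝ}

lemma of_comp {θ : ℝ → ℝ} (hθ : IsDiffeoGerm θ) (h : ∀ᶠ t in 𝓝 0, γ (θ t) = γ' t) :
    CurveEquiv γ γ' :=
  ⟨id, θ, ⟨contDiff_id, rfl, by simpa using Function.bijective_id⟩, hθ, by simp, h⟩

lemma of_triangular {A D : ℝ} (B : ℝ) (hA : A ≠ 0) (hD : D ≠ 0) {Q R : ℝ × ℝ → ℝ}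
    (hQ : IsQuadraticGerm Q) (hR : IsQuadraticGerm R)
    (h : ∀ᶠ t in 𝓝 0, (A * (γ t).1 + B * (γ t).2 + Q (γ t), D * (γ t).2 + R (γ t)) = γ' t) :
    CurveEquiv γ γ' := by
  refine ⟨_, id, isDiffeoGerm_triangular B hA hD hQ hR,
    ⟨contDiff_id, rfl, by simpa using Function.bijective_id⟩, ?_, h⟩
  rw [(hasFDerivAt_triangular A B D hQ hR).fderiv]
  simp

lemma symm (hγ : Tendsto γ (𝓝 0) (𝓝 0)) (h : CurveEquiv γ γ') : CurveEquiv γ' γ := by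
  obtain ⟨ψ, τ, hψ, hτ, htri, h⟩ := h
  obtain ⟨Ψ, hΨ, hΨψ, -⟩ := hψ.exists_inverse
  obtain ⟨θ, hθ, -, hτθ⟩ := hτ.exists_inverse
  refine ⟨Ψ, θ, hΨ, hθ, ?_, ?_⟩
  · have hcomp := fderiv_comp 0 (hΨ.contDiff.differentiable (by simp) (ψ 0))
      (hψ.contDiff.differentiable (by simp) 0)
    rw [EventuallyEq.fderiv_eq (f₁ := Ψ ∘ ψ) (f := id) hΨψ, fderiv_id, hψ.map_zero] at hcomp
    have haxis : fderiv ℝ ψ 0 (1, 0) = (fderiv ℝ ψ 0 (1, 0)).1 • ((1 : ℝ), (0 : ℝ)) :=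
      Prod.ext (by simp) (by simp [htri])
    have hinv := DFunLike.congr_fun hcomp (1, 0)
    rw [ContinuousLinearMap.comp_apply, haxis, map_smul] at hinv
    have hinv₁ : 1 = (fderiv ℝ ψ 0 (1, 0)).1 * (fderiv ℝ Ψ 0 (1, 0)).1 := congrArg Prod.fst hinv
    have hinv₂ : 0 = (fderiv ℝ ψ 0 (1, 0)).1 * (fderiv ℝ Ψ 0 (1, 0)).2 := congrArg Prod.snd hinv
    exact (mul_eq_zero.1 hinv₂.symm).resolve_left (left_ne_zero_of_mul (hinv₁ ▸ one_ne_zero))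
  · filter_upwards [hθ.tendsto.eventually h, hτθ, hγ.eventually hΨψ] with t ht hτt hΨt
    rw [← ht, hτt, hΨt]

lemma trans (h : CurveEquiv γ γ') (h' : CurveEquiv γ' γ'') : CurveEquiv γ γ'' := by
  obtain ⟨ψ, τ, hψ, hτ, htri, h⟩ := h
  obtain ⟨ψ', τ', hψ', hτ', htri', h'⟩ := h'
  refine ⟨ψ' ∘ ψ, τ ∘ τ', hψ'.comp hψ, hτ.comp hτ', ?_, ?_⟩
  · have haxis : fderiv ℝ ψ 0 (1, 0) = (fderiv ℝ ψ 0 (1, 0)).1 • ((1 : ℝ), (0 : ℝ)) :=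
      Prod.ext (by simp) (by simp [htri])
    rw [fderiv_comp 0 (hψ'.contDiff.differentiable (by simp) _)
      (hψ.contDiff.differentiable (by simp) _), hψ.map_zero, ContinuousLinearMap.comp_apply, haxis,
      map_smul, Prod.smul_snd, htri', smul_zero]
  · filter_upwards [h', hτ'.tendsto.eventually h] with t ht' ht
    rw [Function.comp_apply, Function.comp_apply, ht, ht']

end CurveEquiv

/-- The plane curve `t ↦ (t⁴, t⁵ + e t⁷)`, a normal form for discriminants of butterflies. -/
def butterflyCurve (e t : ℝ) : ℝ × ℝ := (t ^ 4, t ^ 5 + e * t ^ 7)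

lemma tendsto_butterflyCurve (e : ℝ) : Tendsto (butterflyCurve e) (𝓝 0) (𝓝 0) := by
  have : Continuous (butterflyCurve e) := by unfold butterflyCurve; fun_prop
  exact this.tendsto' 0 0 (by simp [butterflyCurve])

lemma isDiffeoGerm_id_mul {w : ℝ → ℝ} (hw : ContDiff ℝ ∞ w) (h0 : w 0 ≠ 0) :
    IsDiffeoGerm fun t => t * w t := by
  refine .of_deriv_ne_zero (by fun_prop) (by simp) ?_
  have hderiv := (hasDerivAt_id' (0 : ℝ)).fun_mul (hw.differentiable (by simp) 0).hasDerivAt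
  rw [hderiv.deriv]
  simpa using h0

lemma curveEquiv_butterflyCurve_mul_sq (e : ℝ) {μ : ℝ} (hμ : μ ≠ 0) :
    CurveEquiv (butterflyCurve e) (butterflyCurve (e * μ ^ 2)) := by
  have hscale : CurveEquiv (butterflyCurve e) (fun t => butterflyCurve (e * μ ^ 2) (μ⁻¹ * t)) :=
    .of_triangular (A := μ⁻¹ ^ 4) (D := μ⁻¹ ^ 5) 0 (by positivity) (by positivity) .zero .zero
      (.of_forall fun t => by
        simp only [butterflyCurve, Prod.mk.injEq]
        constructor <;> field_simp <;> ring)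
  refine hscale.trans (.of_comp (θ := fun t => t * μ)
    (isDiffeoGerm_id_mul contDiff_const hμ) (.of_forall fun t => ?_))
  rw [mul_comm t, inv_mul_cancel_left₀ hμ]

/-- The new parameter is the fourth root of `x`; it agrees with `t * w t` up to order `k + 1`. -/
lemma exists_curveEquiv_pow_four {e : ℝ} {x y w : ℝ → ℝ} (hy : ContDiff ℝ ∞ y)
    (hw : ContDiff ℝ ∞ w) (hw0 : w 0 = 1) {k : ℕ} (hk : k ≠ 0)
    (hxw : VanishesToOrder (4 + k) fun t => x t - (t * w t) ^ 4)
    (hyw : VanishesToOrder (5 + k) fun t => y t - (butterflyCurve e (t * w t)).2) :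
    ∃ v : ℝ → ℝ, ContDiff ℝ ∞ v ∧
      (VanishesToOrder (5 + k) fun s => v s - (butterflyCurve e s).2) ∧
      CurveEquiv (fun t => (x t, y t)) fun s => (s ^ 4, v s) := by
  obtain ⟨r, hr, hxr⟩ := hxw
  obtain ⟨u, hu, hu0, hu4⟩ := exists_contDiff_pow_four_eq
    (m := fun t => w t ^ 4 + t ^ k * r t) (by fun_prop) (by simp [hw0, hk])
  have huw : VanishesToOrder k fun t => u t - w t :=
    .of_pow_sub_pow hu hw (hu0.trans hw0.symm) (hw0 ▸ one_ne_zero) four_ne_zero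
      ⟨r, hr, hu4.mono fun t ht => by simp only [ht]; ring⟩
  have hpow (n : ℕ) : VanishesToOrder (n + k) fun t => (t * u t) ^ n - (t * w t) ^ n :=
    ((VanishesToOrder.id_pow n).mul (huw.pow_sub_pow hu hw n)).congr
      (.of_forall fun t => by ring)
  have hyu : VanishesToOrder (5 + k) fun t => y t - (butterflyCurve e (t * u t)).2 := by
    refine ((hyw.sub (hpow 5)).sub (.contDiff_mul (contDiff_const (c := e))
      ((hpow 7).mono (show 5 + k ≤ 7 + k by omega)))).congr (.of_forall fun t => ?_)
    simp only [butterflyCurve]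
    ring
  obtain ⟨θ, hθ, -, hθr⟩ := (isDiffeoGerm_id_mul hu (hu0 ▸ one_ne_zero)).exists_inverse
  refine ⟨fun s => y (θ s), hy.comp hθ.contDiff, ?_, .of_comp hθ ?_⟩
  · have hcomp := hyu.comp (m := 0) hθ.contDiff (.one_order hθ.contDiff hθ.map_zero)
    rw [zero_add, one_mul] at hcomp
    exact hcomp.congr (hθr.mono fun s hs => by simp only [hs])
  · filter_upwards [hθr, hθ.tendsto.eventually hu4, hθ.tendsto.eventually hxr] with s hs hus hxs
    refine Prod.ext ?_ rfl
    conv_rhs => rw [← hs]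
    linear_combination hxs - θ s ^ 4 * hus

lemma IsQuadraticGerm.monomial (c : ℝ) {i j : ℕ} (hij : 2 ≤ i + j) :
    IsQuadraticGerm fun p => c * (p.1 ^ i * p.2 ^ j) := by
  rcases i with _ | i
  · rw [zero_add] at hij
    obtain ⟨j, rfl⟩ := Nat.exists_eq_add_of_le hij
    convert mul (U := fun p => c * p.2) (V := fun p => p.2 ^ (1 + j)) (by fun_prop) (by fun_prop)
      (by simp) (by simp) using 2
    ring
  · have hij' : i ≠ 0 ∨ j ≠ 0 := by omega
    convert mul (U := fun p => c * p.1) (V := fun p => p.1 ^ i * p.2 ^ j) (by fun_prop)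
      (by fun_prop) (by simp) (by simpa using hij') using 2
    ring

/-- A term of order `4 i + 5 j` in the second coordinate is removed by subtracting a multiple of
`x ^ i * y ^ j`. -/
lemma exists_curveEquiv_vanishesToOrder_succ {e : ℝ} {v : ℝ → ℝ} (hv : ContDiff ℝ ∞ v) {i j : ℕ}
    (hij : 2 ≤ i + j)
    (hvan : VanishesToOrder (4 * i + 5 * j) fun s => v s - (butterflyCurve e s).2) :
    ∃ v' : ℝ → ℝ, ContDiff ℝ ∞ v' ∧
      (VanishesToOrder (4 * i + 5 * j + 1) fun s => v' s - (butterflyCurve e s).2) ∧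
      CurveEquiv (fun s => (s ^ 4, v s)) fun s => (s ^ 4, v' s) := by
  obtain ⟨q, hq, hvq⟩ := hvan.mono (show 6 ≤ 4 * i + 5 * j by omega)
  obtain ⟨r, hr, hvr⟩ := hvan
  refine ⟨fun s => v s - r 0 * ((s ^ 4) ^ i * v s ^ j), by fun_prop, ?_,
    .of_triangular 0 one_ne_zero one_ne_zero .zero (.monomial (-r 0) hij) (.of_forall fun s => ?_)⟩
  · have hlead : VanishesToOrder 1 fun s => r s - r 0 * (1 + e * s ^ 2 + s * q s) ^ j :=
      .one_order (by fun_prop) (by simp)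
    refine ((VanishesToOrder.id_pow (4 * i + 5 * j)).mul hlead).congr ?_
    filter_upwards [hvq, hvr] with s hsq hsr
    have hv_eq : v s = s ^ 5 * (1 + e * s ^ 2 + s * q s) := by
      simp only [butterflyCurve] at hsq
      linear_combination hsq
    have hv_pow : v s ^ j = s ^ (5 * j) * (1 + e * s ^ 2 + s * q s) ^ j := by
      rw [hv_eq, mul_pow, pow_mul]
    linear_combination hsr - r 0 * (s ^ 4) ^ i * hv_pow
  · exact Prod.ext (by ring) (by ring)

/-- `11` is not of the form `4 i + 5 j`, but a multiple of `y²` added to the first coordinate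
changes the term of order `11` in the second one, after reparametrization. -/
lemma exists_curveEquiv_vanishesToOrder_twelve {e : ℝ} {v : ℝ → ℝ} (hv : ContDiff ℝ ∞ v)
    (hvan : VanishesToOrder 11 fun s => v s - (butterflyCurve e s).2) :
    ∃ v' : ℝ → ℝ, ContDiff ℝ ∞ v' ∧
      (VanishesToOrder 12 fun s => v' s - (butterflyCurve e s).2) ∧
      CurveEquiv (fun s => (s ^ 4, v s)) fun s => (s ^ 4, v' s) := by
  obtain ⟨r, hr, hvr⟩ := hvan
  obtain ⟨r₁, hr₁, hrr₁⟩ := exists_eq_add_mul hr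
  have hv_eq : ∀ᶠ s in 𝓝 0, v s = s ^ 5 + e * s ^ 7 + s ^ 11 * r s :=
    hvr.mono fun s hs => by simp only [butterflyCurve] at hs; linear_combination hs
  obtain ⟨κ, hκ⟩ : ∃ κ, r 0 = 5 * κ := ⟨r 0 / 5, by ring⟩
  have hfst : VanishesToOrder (4 + 7) fun s =>
      (s ^ 4 + 4 * κ * v s ^ 2) - (s * (1 + κ * s ^ 6)) ^ 4 := by
    refine ⟨fun s => 4 * κ * (s * (2 * e + 2 * s ^ 4 * r s) + s ^ 3 * (e + s ^ 4 * r s) ^ 2) -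
      s ^ 5 * (6 * κ ^ 2 + 4 * κ ^ 3 * s ^ 6 + κ ^ 4 * s ^ 12), by fun_prop,
      hv_eq.mono fun s hs => ?_⟩
    simp only [hs]
    ring
  have hsnd : VanishesToOrder (5 + 7) fun s =>
      v s - (butterflyCurve e (s * (1 + κ * s ^ 6))).2 := by
    refine ⟨fun s => r₁ s - s ^ 5 * (10 * κ ^ 2 + 10 * κ ^ 3 * s ^ 6 + 5 * κ ^ 4 * s ^ 12 +
      κ ^ 5 * s ^ 18) - e * κ * s * ∑ k ∈ Finset.range 7, (1 + κ * s ^ 6) ^ k, by fun_prop,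
      hv_eq.mono fun s hs => ?_⟩
    have hgeom := geom_sum_mul (1 + κ * s ^ 6) 7
    simp only [hs, hrr₁ s, hκ, butterflyCurve]
    linear_combination e * s ^ 7 * hgeom
  obtain ⟨v', hv', hvan', hequiv⟩ := exists_curveEquiv_pow_four hv (by fun_prop) (by simp)
    (by norm_num) hfst hsnd
  refine ⟨v', hv', hvan', .trans (.of_triangular 0 one_ne_zero one_ne_zero
    (.monomial (i := 0) (j := 2) (4 * κ) le_rfl) .zero (.of_forall fun s => ?_)) hequiv⟩
  exact Prod.ext (by ring) (by ring)

/-- Along the curve, every function in `𝔪¹²` lies in the ring of functions of `(x, y)`: writing it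
as `x³ (a + t b + t² c + t³ d)` with `a, b, c, d` functions of `x = t⁴`, it suffices to express
`t¹³`, `t¹⁴` and `t¹⁵`, for which
`(1 - e⁴ x²) t¹³ = (1 + 3 e² x) x² y - e y³`, `(1 + e² x) t¹⁴ = x y² - 2 e x⁴` and
`(1 - e⁴ x²) t¹⁵ = y³ - (3 e x + e³ x²) x² y`. -/
lemma exists_isQuadraticGerm_comp_butterflyCurve (e : ℝ) {f : ℝ → ℝ}
    (hf : VanishesToOrder 12 f) :
    ∃ Q, IsQuadraticGerm Q ∧ ∀ᶠ t in 𝓝 0, Q (butterflyCurve e t) = f t := by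
  obtain ⟨r, hr, hfr⟩ := hf
  obtain ⟨a, b, c, d, ha, hb, hc, hd, hr_eq⟩ := exists_contDiff_decomposition_mod_four hr
  obtain ⟨M, hM, hM_eq⟩ := exists_contDiff_eventually_mul_eq_one
    (m := fun x : ℝ => 1 + e ^ 2 * x) (a := 0) (by fun_prop) (by simp)
  obtain ⟨N, hN, hN_eq⟩ := exists_contDiff_eventually_mul_eq_one
    (m := fun x : ℝ => 1 - e ^ 4 * x ^ 2) (a := 0) (by fun_prop) (by simp)
  have hfst := IsQuadraticGerm.mul (U := Prod.fst)
    (V := fun p => p.1 * (p.1 * a p.1 + (1 + 3 * e ^ 2 * p.1) * p.2 * N p.1 * b p.1 -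
      2 * e * p.1 ^ 2 * M p.1 * c p.1 - (3 * e * p.1 + e ^ 3 * p.1 ^ 2) * p.2 * N p.1 * d p.1))
    (by fun_prop) (by fun_prop) rfl (by simp)
  have hsnd := IsQuadraticGerm.mul (U := Prod.snd)
    (V := fun p => p.2 * (p.1 * M p.1 * c p.1 + p.2 * N p.1 * (d p.1 - e * b p.1)))
    (by fun_prop) (by fun_prop) rfl (by simp)
  refine ⟨_, hfst.add hsnd, ?_⟩
  have hlim : Tendsto (fun t : ℝ => t ^ 4) (𝓝 0) (𝓝 0) :=
    (by fun_prop : Continuous fun t : ℝ => t ^ 4).tendsto' 0 0 (by simp)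
  filter_upwards [hfr, hlim.eventually hM_eq, hlim.eventually hN_eq] with t ht hMt hNt
  rw [ht, hr_eq t, butterflyCurve]
  linear_combination c (t ^ 4) * t ^ 14 * hMt +
    (t ^ 13 * b (t ^ 4) + t ^ 15 * d (t ^ 4)) * hNt

lemma curveEquiv_butterflyCurve_of_vanishesToOrder_twelve {e : ℝ} {v : ℝ → ℝ}
    (hvan : VanishesToOrder 12 fun s => v s - (butterflyCurve e s).2) :
    CurveEquiv (fun s => (s ^ 4, v s)) (butterflyCurve e) := by
  obtain ⟨Q, hQ, hQ_eq⟩ := exists_isQuadraticGerm_comp_butterflyCurve e hvan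
  refine CurveEquiv.symm (tendsto_butterflyCurve e)
    (.of_triangular 0 one_ne_zero one_ne_zero .zero hQ (hQ_eq.mono fun s hs => ?_))
  rw [hs]
  exact Prod.ext (by simp [butterflyCurve]) (by ring)

lemma curveEquiv_butterflyCurve_of_vanishesToOrder_eight {e : ℝ} {v : ℝ → ℝ}
    (hv : ContDiff ℝ ∞ v) (hvan : VanishesToOrder 8 fun s => v s - (butterflyCurve e s).2) :
    CurveEquiv (fun s => (s ^ 4, v s)) (butterflyCurve e) := by
  obtain ⟨v₁, hv₁, hvan₁, h₁⟩ :=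
    exists_curveEquiv_vanishesToOrder_succ (i := 2) (j := 0) hv le_rfl hvan
  obtain ⟨v₂, hv₂, hvan₂, h₂⟩ :=
    exists_curveEquiv_vanishesToOrder_succ (i := 1) (j := 1) hv₁ le_rfl hvan₁
  obtain ⟨v₃, hv₃, hvan₃, h₃⟩ :=
    exists_curveEquiv_vanishesToOrder_succ (i := 0) (j := 2) hv₂ le_rfl hvan₂
  obtain ⟨v₄, -, hvan₄, h₄⟩ := exists_curveEquiv_vanishesToOrder_twelve hv₃ hvan₃
  exact h₁.trans (h₂.trans (h₃.trans
    (h₄.trans (curveEquiv_butterflyCurve_of_vanishesToOrder_twelve hvan₄))))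

/-- A linear change of coordinates removes `t⁵` from the first coordinate, and the substitution
`t ↦ t + p t² + q t³` removes `t⁶` from both coordinates. -/
lemma curveEquiv_butterflyCurve {c v : ℝ → ℝ} (hv : ContDiff ℝ ∞ v) (a b : ℝ)
    (hc_van : VanishesToOrder 7 fun t => c t + 5 * t ^ 4 + 6 * a * t ^ 5 + 7 * b * t ^ 6)
    (hv_van : VanishesToOrder 8 fun t => v t + 4 * t ^ 5 + 5 * a * t ^ 6 + 6 * b * t ^ 7) :
    CurveEquiv (fun t => (c t, v t)) (butterflyCurve (-(b - 5 / 8 * a ^ 2) / 4)) := by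
  obtain ⟨r₁, hr₁, hc_eq⟩ := hc_van
  obtain ⟨r₂, hr₂, hv_eq⟩ := hv_van
  obtain ⟨p, hp⟩ : ∃ p, p = a / 4 := ⟨_, rfl⟩
  obtain ⟨q, hq⟩ : ∃ q, q = 7 * b / 20 - 5 * a ^ 2 / 32 := ⟨_, rfl⟩
  obtain ⟨e, he⟩ : ∃ e, e = -(b - 5 / 8 * a ^ 2) / 4 := ⟨_, rfl⟩
  have hfst : VanishesToOrder (4 + 3) fun t =>
      (-1 / 5 * c t + a / 20 * v t) - (t * (1 + t * (p + q * t))) ^ 4 := by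
    refine ⟨fun t => -r₁ t / 5 - 6 * a * b / 20 + a * r₂ t * t / 20 - (12 * p * q +
      6 * q ^ 2 * t + 4 * (p + q * t) ^ 3 + t * (p + q * t) ^ 4), by fun_prop, ?_⟩
    filter_upwards [hc_eq, hv_eq] with t hct hvt
    rw [hp, hq]
    linear_combination -1 / 5 * hct + a / 20 * hvt
  have hsnd : VanishesToOrder (5 + 3) fun t =>
      -1 / 4 * v t - (butterflyCurve e (t * (1 + t * (p + q * t)))).2 := by
    refine ⟨fun t => -r₂ t / 4 - (20 * p * q + 10 * q ^ 2 * t + 10 * (p + q * t) ^ 3 +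
      5 * t * (p + q * t) ^ 4 + t ^ 2 * (p + q * t) ^ 5) -
      e * (p + q * t) * ∑ k ∈ Finset.range 7, (1 + t * (p + q * t)) ^ k, by fun_prop, ?_⟩
    filter_upwards [hv_eq] with t hvt
    have hgeom := geom_sum_mul (1 + t * (p + q * t)) 7
    simp only [butterflyCurve]
    generalize ∑ k ∈ Finset.range 7, (1 + t * (p + q * t)) ^ k = G at hgeom ⊢
    linear_combination -1 / 4 * hvt + e * t ^ 7 * hgeom - t ^ 7 * he -
      5 * t ^ 7 * hq - (5 * t ^ 6 + 10 * t ^ 7 * (p + a / 4)) * hp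
  obtain ⟨v', hv', hvan, hequiv⟩ := exists_curveEquiv_pow_four (by fun_prop) (by fun_prop)
    (by simp) (by norm_num) hfst hsnd
  rw [← he]
  refine .trans (.of_triangular (a / 20) (A := -1 / 5) (D := -1 / 4) (by norm_num) (by norm_num)
    .zero .zero (.of_forall fun t => ?_))
    (hequiv.trans (curveEquiv_butterflyCurve_of_vanishesToOrder_eight hv' hvan))
  simp only [add_zero]

lemma exists_eq_mul_add_mul {h : ℝ × ℝ → ℝ} (hh : ContDiff ℝ ∞ h) (h0 : h 0 = 0) :
    ∃ U V : ℝ × ℝ → ℝ, ContDiff ℝ ∞ U ∧ ContDiff ℝ ∞ V ∧ ∀ p, h p = p.1 * U p + p.2 * V p := by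
  obtain ⟨V, hV, hV_eq, -⟩ := exists_eq_add_smul hh
  obtain ⟨U, hU, hU_eq⟩ := exists_eq_add_mul (f := fun x => h (x, 0)) (by fun_prop)
  refine ⟨fun p => U p.1, V, by fun_prop, hV, fun p => ?_⟩
  rw [hV_eq p.1 p.2, hU_eq, Prod.mk_zero_zero, h0, zero_add, smul_eq_mul]

lemma VanishesToOrder.comp_prodMk {n : ℕ} {h : ℝ × ℝ → ℝ} {x y : ℝ → ℝ} (hh : ContDiff ℝ ∞ h)
    (h0 : h 0 = 0) (hx : ContDiff ℝ ∞ x) (hy : ContDiff ℝ ∞ y) (hxn : VanishesToOrder n x)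
    (hyn : VanishesToOrder n y) : VanishesToOrder n fun t => h (x t, y t) := by
  obtain ⟨U, V, hU, hV, h_eq⟩ := exists_eq_mul_add_mul hh h0
  refine ((contDiff_mul (g := fun t => U (x t, y t)) (by fun_prop) hxn).add
    (contDiff_mul (g := fun t => V (x t, y t)) (by fun_prop) hyn)).congr (.of_forall fun t => ?_)
  simp only [h_eq]
  ring

lemma IsQuadraticGerm.vanishesToOrder_comp_prodMk {n : ℕ} {Q : ℝ × ℝ → ℝ} {x y : ℝ → ℝ}
    (hQ : IsQuadraticGerm Q) (hx : ContDiff ℝ ∞ x) (hy : ContDiff ℝ ∞ y)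
    (hxn : VanishesToOrder n x) (hyn : VanishesToOrder n y) :
    VanishesToOrder (n + n) fun t => Q (x t, y t) := by
  obtain ⟨U, V, hU, hV, hQ_eq⟩ := exists_eq_mul_add_mul hQ.contDiff hQ.map_zero
  have hderiv := (hasFDerivAt_fst.fun_mul (hU.differentiable (by simp) 0).hasFDerivAt).fun_add
    (hasFDerivAt_snd.fun_mul (hV.differentiable (by simp) (0 : ℝ × ℝ)).hasFDerivAt)
  have hQ' := hQ.fderiv_zero
  rw [show Q = _ from funext hQ_eq, HasFDerivAt.fderiv hderiv] at hQ'
  have hU0 : U 0 = 0 := by simpa using DFunLike.congr_fun hQ' (1, 0)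
  have hV0 : V 0 = 0 := by simpa using DFunLike.congr_fun hQ' (0, 1)
  refine ((hxn.mul (.comp_prodMk hU hU0 hx hy hxn hyn)).add
    (hyn.mul (.comp_prodMk hV hV0 hx hy hxn hyn))).congr (.of_forall fun t => ?_)
  simp only [hQ_eq]

lemma isQuadraticGerm_sub_fderiv {h : ℝ × ℝ → ℝ} (hh : ContDiff ℝ ∞ h) (h0 : h 0 = 0) :
    IsQuadraticGerm fun p =>
      h p - (p.1 * fderiv ℝ h 0 (1, 0) + p.2 * fderiv ℝ h 0 (0, 1)) := by
  have hlin (p : ℝ × ℝ) :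
      p.1 * fderiv ℝ h 0 (1, 0) + p.2 * fderiv ℝ h 0 (0, 1) = fderiv ℝ h 0 p := by
    rw [← smul_eq_mul, ← smul_eq_mul, ← map_smul, ← map_smul, ← map_add]
    simp
  simp only [hlin]
  refine ⟨by fun_prop, by simp [h0], ?_⟩
  rw [fderiv_fun_sub (hh.differentiable (by simp) 0) (by fun_prop), ContinuousLinearMap.fderiv,
    sub_self]

/-- Both coordinates of `ψ (butterflyCurve e z) = butterflyCurve e' (z * w z)` are compared modulo
`𝔪⁸`, where only the linear part of `ψ` matters. -/
lemma exists_vanishesToOrder_of_curveEquiv {e e' : ℝ}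
    (h : CurveEquiv (butterflyCurve e) (butterflyCurve e')) :
    ∃ (w : ℝ → ℝ) (α β δ : ℝ), ContDiff ℝ ∞ w ∧ w 0 ≠ 0 ∧
      (VanishesToOrder 3 fun z => w z ^ 4 - (α + z * β)) ∧
      VanishesToOrder 3 fun z => w z ^ 5 * (1 + e' * (z * w z) ^ 2) - δ * (1 + e * z ^ 2) := by
  obtain ⟨ψ, τ, hψ, hτ, htri, h⟩ := h
  obtain ⟨σ, hσ, -, hτσ⟩ := hτ.exists_inverse
  obtain ⟨w, hw, hw0, hσw⟩ := hσ.exists_eq_mul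
  have heq : ∀ᶠ z in 𝓝 0, ψ (z ^ 4, z ^ 5 + e * z ^ 7) = butterflyCurve e' (z * w z) := by
    filter_upwards [hσ.tendsto.eventually h, hτσ] with z hz hτz
    rw [← hσw, ← hz, hτz, butterflyCurve]
  have hψ_contDiff := hψ.contDiff
  have hψ₂ : fderiv ℝ (fun p => (ψ p).2) 0 (1, 0) = 0 := by
    rw [(hψ_contDiff.differentiable (by simp) 0).hasFDerivAt.snd.fderiv]
    exact htri
  have hlin {k : ℝ × ℝ → ℝ} (hk : ContDiff ℝ ∞ k) (hk0 : k 0 = 0) :=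
    (isQuadraticGerm_sub_fderiv hk hk0).vanishesToOrder_comp_prodMk (n := 4)
      (x := fun z => z ^ 4) (y := fun z => z ^ 5 + e * z ^ 7) (by fun_prop) (by fun_prop)
      (.id_pow 4) ⟨fun z => z + e * z ^ 3, by fun_prop, .of_forall fun z => by ring⟩
  have h₁ := hlin (k := fun p => (ψ p).1) (by fun_prop) (by simp [hψ.map_zero])
  have h₂ := hlin (k := fun p => (ψ p).2) (by fun_prop) (by simp [hψ.map_zero])
  rw [hψ₂] at h₂
  refine ⟨w, fderiv ℝ (fun p => (ψ p).1) 0 (1, 0), fderiv ℝ (fun p => (ψ p).1) 0 (0, 1),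
    fderiv ℝ (fun p => (ψ p).2) 0 (0, 1), hw, hw0, ?_, ?_⟩
  · generalize fderiv ℝ (fun p => (ψ p).1) 0 (1, 0) = α at *
    generalize fderiv ℝ (fun p => (ψ p).1) 0 (0, 1) = β at *
    refine .of_pow_mul (n := 4) (by fun_prop) (((h₁.mono (show 4 + 3 ≤ 4 + 4 by norm_num)).add
      (.contDiff_mul (contDiff_const (c := e * β)) (.id_pow 7))).congr ?_)
    filter_upwards [heq] with z hz
    rw [hz, butterflyCurve]
    ring
  · refine .of_pow_mul (n := 5) (by fun_prop) (h₂.congr ?_)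
    filter_upwards [heq] with z hz
    rw [hz, butterflyCurve]
    ring

lemma mul_sq_eq_of_vanishesToOrder {e e' α β δ : ℝ} {w : ℝ → ℝ} (hw : ContDiff ℝ ∞ w)
    (hw0 : w 0 ≠ 0) (h₁ : VanishesToOrder 3 fun z => w z ^ 4 - (α + z * β))
    (h₂ : VanishesToOrder 3 fun z => w z ^ 5 * (1 + e' * (z * w z) ^ 2) - δ * (1 + e * z ^ 2)) :
    e' * w 0 ^ 2 = e := by
  have hα : α = w 0 ^ 4 := by linarith [show w 0 ^ 4 - (α + 0 * β) = 0 from h₁.apply_zero]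
  have hδ : δ = w 0 ^ 5 := by
    have := h₂.apply_zero
    simp only [zero_mul] at this
    linarith
  have hmod₂ : VanishesToOrder 2 fun z => w z - w 0 := by
    refine .of_pow_sub_pow hw contDiff_const rfl hw0 (k := 5) (by norm_num)
      (((h₂.mono (by norm_num)).sub (.contDiff_mul
        (g := fun z => w z ^ 5 * e' * w z ^ 2 - δ * e) (by fun_prop) (.id_pow 2))).congr
        (.of_forall fun z => ?_))
    simp only [hδ]
    ring
  have hβ : β = 0 := by
    refine VanishesToOrder.apply_zero (n := 0) (f := fun _ => β) (.of_pow_mul (n := 1)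
      contDiff_const (((hmod₂.pow_sub_pow hw contDiff_const 4).sub
        (h₁.mono (by norm_num))).congr (.of_forall fun z => ?_)))
    simp only [hα]
    ring
  have hmod₃ : VanishesToOrder 3 fun z => w z - w 0 :=
    .of_pow_sub_pow hw contDiff_const rfl hw0 four_ne_zero
      (h₁.congr (.of_forall fun z => by simp [hα, hβ]))
  have hcoeff : w 0 ^ 5 * (e' * w 0 ^ 2 - e) = 0 := by
    refine VanishesToOrder.apply_zero (n := 0) (f := fun _ => w 0 ^ 5 * (e' * w 0 ^ 2 - e))
      (.of_pow_mul (n := 2) contDiff_const (((h₂.sub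
        (.contDiff_mul (g := fun z => 1 + e' * (z * w z) ^ 2) (by fun_prop)
          (hmod₃.pow_sub_pow hw contDiff_const 5))).sub
        (.contDiff_mul (g := fun z => w 0 ^ 5 * e' * z ^ 2) (by fun_prop)
          (hmod₃.pow_sub_pow hw contDiff_const 2))).congr (.of_forall fun z => ?_)))
    simp only [hδ]
    ring
  exact sub_eq_zero.1 ((mul_eq_zero.1 hcoeff).resolve_left (pow_ne_zero 5 hw0))

lemma curveEquiv_butterflyCurve_iff {e e' : ℝ} :
    CurveEquiv (butterflyCurve e) (butterflyCurve e') ↔ ∃ μ ≠ 0, e' = e * μ ^ 2 := by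
  refine ⟨fun h => ?_, fun ⟨μ, hμ, he'⟩ => he' ▸ curveEquiv_butterflyCurve_mul_sq e hμ⟩
  obtain ⟨w, α, β, δ, hw, hw0, h₁, h₂⟩ := exists_vanishesToOrder_of_curveEquiv h
  refine ⟨(w 0)⁻¹, inv_ne_zero hw0, ?_⟩
  rw [← mul_sq_eq_of_vanishesToOrder hw hw0 h₁ h₂,
    inv_pow, mul_inv_cancel_right₀ (pow_ne_zero 2 hw0)]

/-! ### Critical curves and discriminants of germs `(x, g(x, y))` -/

section PartialDerivatives

variable {g : ℝ × ℝ → ℝ}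

lemma contDiff_dop (hg : ContDiff ℝ ∞ g) (v : ℝ × ℝ) : ContDiff ℝ ∞ (dop v g) :=
  (hg.fderiv_right (m := ∞) (by simp)).clm_apply contDiff_const

lemma contDiff_pdx (hg : ContDiff ℝ ∞ g) : ContDiff ℝ ∞ (pdx g) :=
  contDiff_dop hg _

lemma contDiff_pdy (hg : ContDiff ℝ ∞ g) : ContDiff ℝ ∞ (pdy g) :=
  contDiff_dop hg _

lemma fderiv_apply_eq_pdx_add_pdy (g : ℝ × ℝ → ℝ) (p v : ℝ × ℝ) :
    fderiv ℝ g p v = v.1 * pdx g p + v.2 * pdy g p := by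
  conv_lhs => rw [show v = v.1 • ((1 : ℝ), (0 : ℝ)) + v.2 • ((0 : ℝ), (1 : ℝ)) by simp]
  rw [map_add, map_smul, map_smul]
  rfl

lemma hasDerivAt_comp_prodMk (hg : ContDiff ℝ ∞ g) {x y : ℝ → ℝ} {x' y' t : ℝ}
    (hx : HasDerivAt x x' t) (hy : HasDerivAt y y' t) :
    HasDerivAt (fun s => g (x s, y s)) (x' * pdx g (x t, y t) + y' * pdy g (x t, y t)) t :=
  fderiv_apply_eq_pdx_add_pdy g (x t, y t) (x', y') ▸
    (hg.differentiable (by simp) (x t, y t)).hasFDerivAt.comp_hasDerivAt t (hx.prodMk hy)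

lemma deriv_snd_eq_pdy (hg : ContDiff ℝ ∞ g) (x : ℝ) :
    deriv (fun y => g (x, y)) = fun y => pdy g (x, y) := by
  funext y
  simpa using (hasDerivAt_comp_prodMk hg (hasDerivAt_const y x) (hasDerivAt_id' y)).deriv

lemma pdx_pdy_comm (hg : ContDiff ℝ ∞ g) : pdx (pdy g) = pdy (pdx g) := by
  funext p
  have hsymm : IsSymmSndFDerivAt ℝ g p := hg.contDiffAt.isSymmSndFDerivAt (by
    rw [minSmoothness_of_isRCLikeNormedField]
    exact WithTop.coe_le_coe.2 le_top)
  have hdiff : DifferentiableAt ℝ (fderiv ℝ g) p :=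
    (hg.fderiv_right (m := ∞) (by simp)).differentiable (by simp) p
  have hsnd (v w : ℝ × ℝ) : fderiv ℝ (dop v g) p w = fderiv ℝ (fderiv ℝ g) p w v := by
    unfold dop
    rw [fderiv_clm_apply hdiff (by fun_prop)]
    simp
  exact (hsnd _ _).trans ((hsymm _ _).trans (hsnd _ _).symm)

lemma IsQuadraticGerm.pdy_zero (hg : IsQuadraticGerm g) : pdy g 0 = 0 := by
  simp [pdy, dop, hg.fderiv_zero]

lemma hasFDerivAt_fst_prodMk (hg : ContDiff ℝ ∞ g) (p : ℝ × ℝ) :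
    HasFDerivAt (fun q : ℝ × ℝ => (q.1, g q))
      ((ContinuousLinearMap.fst ℝ ℝ ℝ).prod (fderiv ℝ g p)) p :=
  hasFDerivAt_fst.prodMk (hg.differentiable (by simp) p).hasFDerivAt

end PartialDerivatives

lemma jacDet_eq_det (f : ℝ × ℝ → ℝ × ℝ) (p : ℝ × ℝ) : jacDet f p = (fderiv ℝ f p).det := by
  rw [ContinuousLinearMap.det, ← LinearMap.det_toMatrix (Module.Basis.finTwoProd ℝ),
    Matrix.det_fin_two]
  simp only [jacDet, LinearMap.toMatrix_apply, Module.Basis.finTwoProd_zero,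
    Module.Basis.finTwoProd_one, ContinuousLinearMap.coe_coe, Module.Basis.coe_finTwoProd_repr,
    Matrix.cons_val_zero, Matrix.cons_val_one, Matrix.cons_val_fin_one]
  ring

lemma jacDet_ne_zero_iff {f : ℝ × ℝ → ℝ × ℝ} {p : ℝ × ℝ} :
    jacDet f p ≠ 0 ↔ Function.Bijective (fderiv ℝ f p) := by
  rw [jacDet_eq_det, ContinuousLinearMap.det, ← isUnit_iff_ne_zero,
    ← LinearMap.isUnit_iff_isUnit_det, Module.End.isUnit_iff]
  rfl

lemma jacDet_comp {f φ : ℝ × ℝ → ℝ × ℝ} {p : ℝ × ℝ} (hf : DifferentiableAt ℝ f (φ p))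
    (hφ : DifferentiableAt ℝ φ p) : jacDet (f ∘ φ) p = jacDet f (φ p) * jacDet φ p := by
  simp only [jacDet_eq_det, fderiv_comp p hf hφ, ContinuousLinearMap.det]
  exact LinearMap.det_comp _ _

lemma jacDet_fst_prodMk {g : ℝ × ℝ → ℝ} (hg : ContDiff ℝ ∞ g) (p : ℝ × ℝ) :
    jacDet (fun q => (q.1, g q)) p = pdy g p := by
  simp [jacDet, (hasFDerivAt_fst_prodMk hg p).fderiv, pdy, dop]

lemma IsDiffeoGerm.eventually_jacDet_ne_zero {φ : ℝ × ℝ → ℝ × ℝ} (hφ : IsDiffeoGerm φ) :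
    ∀ᶠ p in 𝓝 0, jacDet φ p ≠ 0 := by
  have hcont : Continuous (jacDet φ) := by
    have := hφ.contDiff.continuous_fderiv (by simp)
    unfold jacDet
    fun_prop
  exact hcont.continuousAt.eventually_ne (jacDet_ne_zero_iff.2 hφ.bijective_fderiv)

lemma aEquiv_iff_exists_isDiffeoGerm {f g : ℝ × ℝ → ℝ × ℝ} :
    AEquiv f g ↔ ∃ φ ψ, IsDiffeoGerm φ ∧ IsDiffeoGerm ψ ∧ ∀ᶠ p in 𝓝 0, ψ (f (φ p)) = g p :=
  ⟨fun ⟨φ, ψ, hφ, hψ, hφ0, hψ0, hφb, hψb, h⟩ => ⟨φ, ψ, ⟨hφ, hφ0, hφb⟩, ⟨hψ, hψ0, hψb⟩, h⟩,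
    fun ⟨φ, ψ, hφ, hψ, h⟩ => ⟨φ, ψ, hφ.contDiff, hψ.contDiff, hφ.map_zero, hψ.map_zero,
      hφ.bijective_fderiv, hψ.bijective_fderiv, h⟩⟩

lemma AEquiv.symm {f g : ℝ × ℝ → ℝ × ℝ} (hf : Tendsto f (𝓝 0) (𝓝 0)) (h : AEquiv f g) :
    AEquiv g f := by
  obtain ⟨φ, ψ, hφ, hψ, h⟩ := aEquiv_iff_exists_isDiffeoGerm.1 h
  obtain ⟨φ', hφ', -, hφφ'⟩ := hφ.exists_inverse
  obtain ⟨ψ', hψ', hψ'ψ, -⟩ := hψ.exists_inverse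
  refine aEquiv_iff_exists_isDiffeoGerm.2 ⟨φ', ψ', hφ', hψ', ?_⟩
  filter_upwards [hφ'.tendsto.eventually h, hφφ', hf.eventually hψ'ψ] with p hp hp₁ hp₂
  rw [← hp, hp₁, hp₂]

lemma AEquiv.trans {f g h : ℝ × ℝ → ℝ × ℝ} (hfg : AEquiv f g) (hgh : AEquiv g h) :
    AEquiv f h := by
  obtain ⟨φ₁, ψ₁, hφ₁, hψ₁, h₁⟩ := aEquiv_iff_exists_isDiffeoGerm.1 hfg
  obtain ⟨φ₂, ψ₂, hφ₂, hψ₂, h₂⟩ := aEquiv_iff_exists_isDiffeoGerm.1 hgh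
  refine aEquiv_iff_exists_isDiffeoGerm.2 ⟨φ₁ ∘ φ₂, ψ₂ ∘ ψ₁, hφ₁.comp hφ₂, hψ₂.comp hψ₁, ?_⟩
  filter_upwards [hφ₂.tendsto.eventually h₁, h₂] with p hp₁ hp₂
  simp only [Function.comp_apply, hp₁, hp₂]

/-- The curve `x = c(y)` is the germ at `0` of the critical set of `(x, g(x, y))`. -/
structure IsCriticalCurve (g : ℝ × ℝ → ℝ) (c : ℝ → ℝ) : Prop where
  contDiff : ContDiff ℝ ∞ c
  map_zero : c 0 = 0
  eventually_iff : ∀ᶠ p : ℝ × ℝ in 𝓝 0, pdy g p = 0 ↔ p.1 = c p.2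

/-- The image of the curve `x = c(y)` under `(x, g(x, y))`; when `c` is the critical curve this
parametrizes the discriminant. -/
def discriminantCurve (g : ℝ × ℝ → ℝ) (c : ℝ → ℝ) (t : ℝ) : ℝ × ℝ :=
  (c t, g (c t, t))

lemma tendsto_prodMk_id_zero {c : ℝ → ℝ} (hc : ContDiff ℝ ∞ c) (h0 : c 0 = 0) :
    Tendsto (fun t => (c t, t)) (𝓝 0) (𝓝 0) :=
  (hc.prodMk contDiff_id).continuous.tendsto' 0 0 (by simp [h0])

namespace IsCriticalCurve

variable {g : ℝ × ℝ → ℝ} {c : ℝ → ℝ}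

lemma tendsto (hc : IsCriticalCurve g c) : Tendsto (fun t => (c t, t)) (𝓝 0) (𝓝 0) :=
  tendsto_prodMk_id_zero hc.contDiff hc.map_zero

lemma eventually_pdy_eq_zero (hc : IsCriticalCurve g c) : ∀ᶠ t in 𝓝 0, pdy g (c t, t) = 0 :=
  (hc.tendsto.eventually hc.eventually_iff).mono fun _ ht => ht.2 rfl

end IsCriticalCurve

lemma tendsto_discriminantCurve {g : ℝ × ℝ → ℝ} {c : ℝ → ℝ} (hg : ContDiff ℝ ∞ g) (hg0 : g 0 = 0)
    (hc : ContDiff ℝ ∞ c) (hc0 : c 0 = 0) : Tendsto (discriminantCurve g c) (𝓝 0) (𝓝 0) :=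
  (hc.prodMk (hg.comp (hc.prodMk contDiff_id))).continuous.tendsto' 0 0
    (by simp [hc0, hg0, Prod.mk_zero_zero])

lemma exists_isCriticalCurve {g : ℝ × ℝ → ℝ} (hg : ContDiff ℝ ∞ g) (h0 : pdy g 0 = 0)
    (h1 : pdx (pdy g) 0 ≠ 0) : ∃ c, IsCriticalCurve g c := by
  have hgy := contDiff_pdy hg
  have hderiv : HasFDerivAt (fun q : ℝ × ℝ => pdy g (q.2, q.1))
      ((fderiv ℝ (pdy g) 0).comp ((ContinuousLinearMap.snd ℝ ℝ ℝ).prod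
        (ContinuousLinearMap.fst ℝ ℝ ℝ))) 0 :=
    (hgy.differentiable (by simp) (0, 0)).hasFDerivAt.comp (0 : ℝ × ℝ)
      (hasFDerivAt_snd.prodMk hasFDerivAt_fst)
  obtain ⟨c, hc, hc0, h⟩ := exists_contDiff_eventually_eq_zero_iff
    (Q := fun q : ℝ × ℝ => pdy g (q.2, q.1)) (by fun_prop) h0
    (by rw [hderiv.fderiv]; exact h1)
  have hswap : Tendsto (Prod.swap : ℝ × ℝ → ℝ × ℝ) (𝓝 0) (𝓝 0) :=
    continuous_swap.tendsto' 0 0 rfl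
  exact ⟨c, hc, hc0, hswap.eventually h⟩

section CurveOfGerm

variable {g g' : ℝ × ℝ → ℝ} {c c' : ℝ → ℝ} {φ ψ : ℝ × ℝ → ℝ × ℝ}

lemma eventually_pdy_eq_zero_iff (hg : IsQuadraticGerm g) (hg' : ContDiff ℝ ∞ g')
    (hφ : IsDiffeoGerm φ) (hψ : IsDiffeoGerm ψ)
    (h : ∀ᶠ p in 𝓝 0, ψ ((φ p).1, g (φ p)) = (p.1, g' p)) :
    ∀ᶠ p in 𝓝 0, pdy g' p = 0 ↔ pdy g (φ p) = 0 := by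
  have hgs := hg.contDiff
  have hf : ContDiff ℝ ∞ fun q : ℝ × ℝ => (q.1, g q) := by fun_prop
  have hf_tendsto : Tendsto (fun q : ℝ × ℝ => (q.1, g q)) (𝓝 0) (𝓝 0) :=
    hf.continuous.tendsto' 0 0 (by simp [hg.map_zero])
  filter_upwards [h.eventually_nhds, hφ.eventually_jacDet_ne_zero,
    (hf_tendsto.comp hφ.tendsto).eventually hψ.eventually_jacDet_ne_zero] with p hp hφp hψp
  have hjac : jacDet (ψ ∘ (fun q => (q.1, g q)) ∘ φ) p = jacDet (fun q => (q.1, g' q)) p := by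
    have hfderiv : fderiv ℝ (ψ ∘ (fun q => (q.1, g q)) ∘ φ) p = fderiv ℝ (fun q => (q.1, g' q)) p :=
      EventuallyEq.fderiv_eq hp
    simp only [jacDet, hfderiv]
  rw [jacDet_comp (hψ.contDiff.differentiable (by simp) _)
      ((hf.comp hφ.contDiff).differentiable (by simp) _),
    jacDet_comp (hf.differentiable (by simp) _) (hφ.contDiff.differentiable (by simp) _),
    jacDet_fst_prodMk hgs, jacDet_fst_prodMk hg'] at hjac
  rw [← hjac, mul_eq_zero_iff_left hψp, mul_eq_zero_iff_right hφp]

lemma eventually_eq_prodMk_of_isCriticalCurve (hc : IsCriticalCurve g c)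
    (hc' : IsCriticalCurve g' c') (hφ : IsDiffeoGerm φ)
    (h : ∀ᶠ p in 𝓝 0, pdy g' p = 0 ↔ pdy g (φ p) = 0) :
    ∀ᶠ t in 𝓝 0, φ (c' t, t) = (c (φ (c' t, t)).2, (φ (c' t, t)).2) := by
  filter_upwards [hc'.tendsto.eventually h, hc'.eventually_pdy_eq_zero,
    (hφ.tendsto.comp hc'.tendsto).eventually hc.eventually_iff] with t ht ht' hct
  exact Prod.ext (hct.1 (ht.1 ht')) rfl

/-- The derivative of `φ` at `0` is injective, and the image of the critical curve is a graph over
the second axis. -/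
lemma isDiffeoGerm_snd_comp_prodMk (hc : ContDiff ℝ ∞ c) (hc' : ContDiff ℝ ∞ c') (hc0 : c' 0 = 0)
    (hφ : IsDiffeoGerm φ)
    (h : ∀ᶠ t in 𝓝 0, φ (c' t, t) = (c (φ (c' t, t)).2, (φ (c' t, t)).2)) :
    IsDiffeoGerm fun t => (φ (c' t, t)).2 := by
  have hφs := hφ.contDiff
  set τ : ℝ → ℝ := fun t => (φ (c' t, t)).2
  have hτ : ContDiff ℝ ∞ τ := by fun_prop
  have hτ0 : τ 0 = 0 := by simp [τ, hc0, Prod.mk_zero_zero, hφ.map_zero]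
  refine .of_deriv_ne_zero hτ hτ0 fun hτ' => ?_
  have hcurve : HasDerivAt (fun t => φ (c' t, t)) (fderiv ℝ φ 0 (deriv c' 0, 1)) 0 := by
    refine (hφs.differentiable (by simp) 0).hasFDerivAt.comp_hasDerivAt_of_eq 0
      ((hc'.differentiable (by simp) 0).hasDerivAt.prodMk (hasDerivAt_id' 0))
      (by simp only [hc0, Prod.mk_zero_zero])
  have hτ_deriv : HasDerivAt τ 0 0 := by
    simpa only [hτ'] using (hτ.differentiable (by simp) 0).hasDerivAt
  have hgraph : HasDerivAt (fun t => (c (τ t), τ t)) (deriv c (τ 0) * 0, 0) 0 :=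
    ((hc.differentiable (by simp) (τ 0)).hasDerivAt.comp 0 hτ_deriv).prodMk hτ_deriv
  have hker : fderiv ℝ φ 0 (deriv c' 0, 1) = fderiv ℝ φ 0 0 := by
    rw [hcurve.unique (hgraph.congr_of_eventuallyEq h), mul_zero, map_zero, Prod.mk_zero_zero]
  simpa using hφ.bijective_fderiv.1 hker

lemma fderiv_apply_one_zero_snd_eq_zero (hg : IsQuadraticGerm g) (hg' : IsQuadraticGerm g')
    (hφ : IsDiffeoGerm φ) (hψ : IsDiffeoGerm ψ)
    (h : ∀ᶠ p in 𝓝 0, ψ ((φ p).1, g (φ p)) = (p.1, g' p)) : (fderiv ℝ ψ 0 (1, 0)).2 = 0 := by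
  obtain ⟨v, hv⟩ := hφ.bijective_fderiv.2 (1, 0)
  have hline : HasDerivAt (fun s : ℝ => s • v) v 0 := by
    simpa using (hasDerivAt_id' (0 : ℝ)).smul_const v
  have hφv : HasDerivAt (fun s : ℝ => φ (s • v)) (1, 0) 0 := by
    rw [← hv]
    exact (hφ.contDiff.differentiable (by simp) 0).hasFDerivAt.comp_hasDerivAt_of_eq 0 hline
      (by simp)
  have hfφv := (hasFDerivAt_fst_prodMk hg.contDiff 0).comp_hasDerivAt_of_eq 0 hφv
    (by simp [hφ.map_zero])
  have hψfφv := (hψ.contDiff.differentiable (by simp) 0).hasFDerivAt.comp_hasDerivAt_of_eq 0 hfφv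
    (by simp [hφ.map_zero, hg.map_zero, Prod.mk_zero_zero])
  have hf'v := (hasFDerivAt_fst_prodMk hg'.contDiff 0).comp_hasDerivAt_of_eq 0 hline (by simp)
  have hline_tendsto : Tendsto (fun s : ℝ => s • v) (𝓝 0) (𝓝 0) :=
    hline.continuousAt.tendsto.trans (by simp)
  have heq := hψfφv.unique (hf'v.congr_of_eventuallyEq (hline_tendsto.eventually h))
  simpa [hg.fderiv_zero, hg'.fderiv_zero] using congrArg Prod.snd heq

lemma curveEquiv_discriminantCurve_of_aEquiv (hg : IsQuadraticGerm g) (hg' : IsQuadraticGerm g')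
    (hc : IsCriticalCurve g c) (hc' : IsCriticalCurve g' c')
    (h : AEquiv (fun p => (p.1, g p)) fun p => (p.1, g' p)) :
    CurveEquiv (discriminantCurve g c) (discriminantCurve g' c') := by
  obtain ⟨φ, ψ, hφ, hψ, h⟩ := aEquiv_iff_exists_isDiffeoGerm.1 h
  have hgraph := eventually_eq_prodMk_of_isCriticalCurve hc hc' hφ
    (eventually_pdy_eq_zero_iff hg hg'.contDiff hφ hψ h)
  refine ⟨ψ, _, hψ, isDiffeoGerm_snd_comp_prodMk hc.contDiff hc'.contDiff hc'.map_zero hφ hgraph,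
    fderiv_apply_one_zero_snd_eq_zero hg hg' hφ hψ h, ?_⟩
  filter_upwards [hgraph, hc'.tendsto.eventually h] with t ht htψ
  rw [ht] at htψ
  exact htψ

end CurveOfGerm

section Reparametrization

variable {g : ℝ × ℝ → ℝ} {ψ : ℝ × ℝ → ℝ × ℝ} {σ : ℝ → ℝ}

lemma isDiffeoGerm_fst_comp_prodMk (hg : IsQuadraticGerm g) (hψ : IsDiffeoGerm ψ)
    (htri : (fderiv ℝ ψ 0 (1, 0)).2 = 0) (hσ : IsDiffeoGerm σ) :
    IsDiffeoGerm fun p : ℝ × ℝ => ((ψ (p.1, g p)).1, σ p.2) := by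
  have hgs := hg.contDiff
  have hψs := hψ.contDiff
  have hσs := hσ.contDiff
  have hψ' : HasFDerivAt ψ (fderiv ℝ ψ 0) ((0 : ℝ × ℝ).1, g 0) := by
    rw [hg.map_zero]
    exact (hψs.differentiable (by simp) 0).hasFDerivAt
  have hσ' : HasDerivAt σ (deriv σ 0) (0 : ℝ × ℝ).2 := (hσs.differentiable (by simp) 0).hasDerivAt
  have hderiv : HasFDerivAt (fun p : ℝ × ℝ => ((ψ (p.1, g p)).1, σ p.2)) _ 0 :=
    (hψ'.comp (0 : ℝ × ℝ) (hasFDerivAt_fst_prodMk hgs 0)).fst.prodMk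
      (hσ'.comp_hasFDerivAt (0 : ℝ × ℝ) hasFDerivAt_snd)
  refine .of_injective (by fun_prop)
    (by simp [hg.map_zero, Prod.mk_zero_zero, hψ.map_zero, hσ.map_zero])
    ((injective_iff_map_eq_zero _).2 fun v hv => ?_)
  rw [hderiv.fderiv, hg.fderiv_zero] at hv
  have hv₂ : v.2 = 0 := by simpa [hσ.deriv_ne_zero] using congrArg Prod.snd hv
  have hv₁ : v.1 = 0 := by
    have hψv : fderiv ℝ ψ 0 (v.1, 0) = v.1 • fderiv ℝ ψ 0 (1, 0) := by
      rw [← map_smul, Prod.smul_mk, smul_eq_mul, mul_one, smul_zero]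
    have hker : fderiv ℝ ψ 0 (v.1, 0) = 0 :=
      Prod.ext (by simpa using congrArg Prod.fst hv) (by rw [hψv, Prod.smul_snd, htri]; simp)
    simpa using hψ.bijective_fderiv.1 (hker.trans (map_zero _).symm)
  exact Prod.ext hv₁ hv₂

/-- With `F = ψ ∘ (x, g)` and `σ` inverse to the reparametrization of the curves, the new source
coordinates `(F₁, σ(y))` bring `F` to the form `(x, G(x, y))`. -/
lemma exists_aEquiv_of_curveEquiv (hg : IsQuadraticGerm g) {c : ℝ → ℝ} (hc : IsCriticalCurve g c)
    {γ : ℝ → ℝ × ℝ} (h : CurveEquiv (discriminantCurve g c) γ) :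
    ∃ G, ContDiff ℝ ∞ G ∧ AEquiv (fun p => (p.1, g p)) (fun p => (p.1, G p)) ∧
      ∀ᶠ t in 𝓝 0, G ((γ t).1, t) = (γ t).2 ∧ pdy G ((γ t).1, t) = 0 := by
  obtain ⟨ψ, τ, hψ, hτ, htri, h⟩ := h
  obtain ⟨σ, hσ, hστ, -⟩ := hτ.exists_inverse
  have hΘ := isDiffeoGerm_fst_comp_prodMk hg hψ htri hσ
  obtain ⟨θ, hθ, hθΘ, hΘθ⟩ := hΘ.exists_inverse
  have hgs := hg.contDiff
  have hψs := hψ.contDiff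
  have hθs := hθ.contDiff
  let G : ℝ × ℝ → ℝ := fun q => (ψ ((θ q).1, g (θ q))).2
  have hG : ContDiff ℝ ∞ G := by fun_prop
  have hF : ∀ᶠ q in 𝓝 0, ψ ((θ q).1, g (θ q)) = (q.1, G q) :=
    hΘθ.mono fun q hq => Prod.ext (Prod.ext_iff.1 hq).1 rfl
  have hcτ := hc.tendsto.comp hτ.tendsto
  have hΘc : ∀ᶠ t in 𝓝 0, ((ψ (c (τ t), g (c (τ t), τ t))).1, σ (τ t)) = ((γ t).1, t) := by
    filter_upwards [h, hστ] with t ht hσt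
    exact Prod.ext (Prod.ext_iff.1 ht).1 hσt
  refine ⟨G, hG, aEquiv_iff_exists_isDiffeoGerm.2 ⟨θ, ψ, hθ, hψ, hF⟩, ?_⟩
  filter_upwards [h, hΘc, hcτ.eventually hθΘ, hτ.tendsto.eventually hc.eventually_pdy_eq_zero,
    (hΘ.tendsto.comp hcτ).eventually (eventually_pdy_eq_zero_iff hg hG hθ hψ hF)]
    with t ht hΘt hθt hct hpdy
  simp only [Function.comp_apply] at hθt hpdy
  rw [hθt] at hpdy
  rw [hΘt] at hθt hpdy
  refine ⟨?_, hpdy.2 hct⟩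
  simp only [G, hθt]
  exact congrArg Prod.snd ht

end Reparametrization

section FixedDiscriminant

variable {g h D : ℝ × ℝ → ℝ} {c : ℝ → ℝ}

lemma exists_eq_add_sub_mul (hh : ContDiff ℝ ∞ h) (hc : ContDiff ℝ ∞ c) :
    ∃ m : ℝ × ℝ → ℝ, ContDiff ℝ ∞ m ∧
      (∀ p, h p = h (c p.2, p.2) + (p.1 - c p.2) * m p) ∧ ∀ t, m (c t, t) = pdx h (c t, t) := by
  have hF : ContDiff ℝ ∞ fun q : ℝ × ℝ => h (q.2 + c q.1, q.1) := by fun_prop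
  obtain ⟨F₁, hF₁, hF_eq, hF₁_zero⟩ := exists_eq_add_smul hF
  refine ⟨fun p => F₁ (p.2, p.1 - c p.2), by fun_prop, fun p => ?_, fun t => ?_⟩
  · simpa using hF_eq p.2 (p.1 - c p.2)
  · have hpdx := hasDerivAt_comp_prodMk hh ((hasDerivAt_id' 0).add_const (c t))
      (hasDerivAt_const 0 t)
    have hpdy := congrFun (deriv_snd_eq_pdy hF t) 0
    simp only [hpdx.deriv, zero_add, one_mul, zero_mul, add_zero] at hpdy
    rw [hpdy]
    simp only [sub_self]
    exact hF₁_zero t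

lemma eventually_pdx_eq_zero (hD : ContDiff ℝ ∞ D) (hc : ContDiff ℝ ∞ c)
    (hc_ne : ∀ᶠ t in 𝓝[≠] 0, deriv c t ≠ 0) (h0 : ∀ᶠ t in 𝓝 0, D (c t, t) = 0)
    (h1 : ∀ᶠ t in 𝓝 0, pdy D (c t, t) = 0) : ∀ᶠ t in 𝓝 0, pdx D (c t, t) = 0 := by
  have hpdx : ContDiff ℝ ∞ fun t => pdx D (c t, t) :=
    (contDiff_pdx hD).comp (hc.prodMk contDiff_id)
  refine (hpdx.continuous.continuousAt.eventuallyEq_nhds_iff_eventuallyEq_nhdsNE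
    continuousAt_const).1 ?_
  filter_upwards [hc_ne, (eventually_eventually_nhds.2 h0).filter_mono nhdsWithin_le_nhds,
    h1.filter_mono nhdsWithin_le_nhds] with t hct h0t h1t
  have hderiv := hasDerivAt_comp_prodMk hD (hc.differentiable (by simp) t).hasDerivAt
    (hasDerivAt_id' t)
  have hzero := hderiv.unique ((hasDerivAt_const t (0 : ℝ)).congr_of_eventuallyEq h0t)
  rw [h1t, mul_zero, add_zero] at hzero
  exact (mul_eq_zero.1 hzero).resolve_left hct

lemma exists_eq_sq_mul (hD : ContDiff ℝ ∞ D) (hc : ContDiff ℝ ∞ c)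
    (h0 : ∀ᶠ t in 𝓝 0, D (c t, t) = 0) (h1 : ∀ᶠ t in 𝓝 0, pdx D (c t, t) = 0) :
    ∃ K : ℝ × ℝ → ℝ, ContDiff ℝ ∞ K ∧ ∀ᶠ p in 𝓝 0, D p = (p.1 - c p.2) ^ 2 * K p := by
  obtain ⟨m, hm, hDm, hm_curve⟩ := exists_eq_add_sub_mul hD hc
  obtain ⟨K, hK, hmK, -⟩ := exists_eq_add_sub_mul hm hc
  refine ⟨K, hK, ?_⟩
  have hsnd : Tendsto (Prod.snd : ℝ × ℝ → ℝ) (𝓝 0) (𝓝 0) := continuous_snd.tendsto' 0 0 rfl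
  filter_upwards [hsnd.eventually h0, hsnd.eventually h1] with p h0p h1p
  rw [hDm p, hmK p, hm_curve, h0p, h1p]
  ring

lemma exists_sub_eq_sq_mul {G : ℝ × ℝ → ℝ} (hG : ContDiff ℝ ∞ G) (hg : ContDiff ℝ ∞ g)
    (hc : ContDiff ℝ ∞ c) (hc_ne : ∀ᶠ t in 𝓝[≠] 0, deriv c t ≠ 0)
    (h0 : ∀ᶠ t in 𝓝 0, G (c t, t) = g (c t, t))
    (h1 : ∀ᶠ t in 𝓝 0, pdy G (c t, t) = pdy g (c t, t)) :
    ∃ K : ℝ × ℝ → ℝ, ContDiff ℝ ∞ K ∧ ∀ᶠ p in 𝓝 0, G p - g p = (p.1 - c p.2) ^ 2 * K p := by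
  have hD : ContDiff ℝ ∞ fun p => G p - g p := hG.sub hg
  have hpdy (p : ℝ × ℝ) : pdy (fun p => G p - g p) p = pdy G p - pdy g p := by
    simp only [pdy, dop]
    rw [fderiv_fun_sub (hG.differentiable (by simp) p) (hg.differentiable (by simp) p)]
    rfl
  have hD0 : ∀ᶠ t in 𝓝 0, G (c t, t) - g (c t, t) = 0 := h0.mono fun t ht => sub_eq_zero.2 ht
  have hD1 : ∀ᶠ t in 𝓝 0, pdy (fun p => G p - g p) (c t, t) = 0 :=
    h1.mono fun t ht => (hpdy _).trans (sub_eq_zero.2 ht)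
  exact exists_eq_sq_mul hD hc hD0 (eventually_pdx_eq_zero hD hc hc_ne hD0 hD1)

lemma exists_eq_add_mul_pdy_add_sq_mul (hh : ContDiff ℝ ∞ h) :
    ∃ R : (ℝ × ℝ) × ℝ → ℝ, ContDiff ℝ ∞ R ∧
      ∀ p s, h (p.1, p.2 + s) = h p + s * pdy h p + s ^ 2 * R (p, s) := by
  have hF : ContDiff ℝ ∞ fun q : (ℝ × ℝ) × ℝ => h (q.1.1, q.1.2 + q.2) := by fun_prop
  obtain ⟨F₁, hF₁, hF_eq, hF₁_zero⟩ := exists_eq_add_smul hF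
  obtain ⟨R, hR, hR_eq, -⟩ := exists_eq_add_smul hF₁
  refine ⟨R, hR, fun p s => ?_⟩
  have hpdy : F₁ (p, 0) = pdy h p := by
    have hline := (hF.differentiable (by simp) (p, 0)).hasFDerivAt.comp_hasDerivAt 0
      ((hasDerivAt_const 0 p).prodMk (hasDerivAt_id' (0 : ℝ)))
    have hpdy := hasDerivAt_comp_prodMk hh (hasDerivAt_const 0 p.1)
      ((hasDerivAt_id' (0 : ℝ)).const_add p.2)
    rw [hF₁_zero, hline.unique hpdy]
    simp
  rw [hF_eq p s, hR_eq p s, hpdy]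
  simp only [add_zero, smul_eq_mul]
  ring

lemma exists_contDiff_mul_add_sq_mul_eq {E : Type*} [NormedAddCommGroup E] [NormedSpace ℝ E]
    [FiniteDimensional ℝ E] {m K u : E → ℝ} {R : E × ℝ → ℝ} (hm : ContDiff ℝ ∞ m)
    (hK : ContDiff ℝ ∞ K) (hu : ContDiff ℝ ∞ u) (hR : ContDiff ℝ ∞ R) (hm0 : m 0 ≠ 0)
    (hu0 : u 0 = 0) (hR0 : R 0 = 0) :
    ∃ w : E → ℝ, ContDiff ℝ ∞ w ∧
      ∀ᶠ p in 𝓝 0, w p * m p + w p ^ 2 * R (p, u p * w p) = K p := by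
  let w₀ := K 0 / m 0
  let Q : E × ℝ → ℝ := fun q =>
    (w₀ + q.2) * m q.1 + (w₀ + q.2) ^ 2 * R (q.1, u q.1 * (w₀ + q.2)) - K q.1
  have hQ : ContDiff ℝ ∞ Q := by fun_prop
  have hQ_line (s : ℝ) : Q (0, s) = s * m 0 := by
    simp only [Q, hu0, zero_mul, Prod.mk_zero_zero, hR0, w₀]
    field_simp
    ring
  have hderiv : fderiv ℝ Q 0 (0, 1) = m 0 := by
    have hline := (hQ.differentiable (by simp) (0, 0)).hasFDerivAt.comp_hasDerivAt 0
      ((hasDerivAt_const 0 (0 : E)).prodMk (hasDerivAt_id' (0 : ℝ)))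
    refine hline.unique ?_
    simpa only [Function.comp_def, hQ_line, one_mul] using (hasDerivAt_id' (0 : ℝ)).mul_const (m 0)
  obtain ⟨w, hw, hw0, hQw⟩ := exists_contDiff_eventually_eq_zero_iff hQ
    ((hQ_line 0).trans (zero_mul _)) (by rwa [hderiv])
  have hgraph : Tendsto (fun p => (p, w p)) (𝓝 0) (𝓝 0) :=
    (contDiff_id.prodMk hw).continuous.tendsto' 0 0 (by simp [hw0])
  exact ⟨fun p => w₀ + w p, by fun_prop,
    (hgraph.eventually hQw).mono fun p hp => sub_eq_zero.1 (hp.2 rfl)⟩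

lemma isDiffeoGerm_add_mul {w : ℝ × ℝ → ℝ} (hc : ContDiff ℝ ∞ c) (hc0 : c 0 = 0)
    (hc1 : deriv c 0 = 0) (hw : ContDiff ℝ ∞ w) :
    IsDiffeoGerm fun p : ℝ × ℝ => (p.1, p.2 + (p.1 - c p.2) * w p) := by
  have hc' : HasDerivAt c 0 (0 : ℝ × ℝ).2 := by
    simpa [hc1] using (hc.differentiable (by simp) 0).hasDerivAt
  have hderiv : HasFDerivAt (fun p : ℝ × ℝ => (p.1, p.2 + (p.1 - c p.2) * w p)) _ 0 :=
    hasFDerivAt_fst.prodMk (hasFDerivAt_snd.add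
      ((hasFDerivAt_fst.sub (hc'.comp_hasFDerivAt (0 : ℝ × ℝ) hasFDerivAt_snd)).mul
        (hw.differentiable (by simp) 0).hasFDerivAt))
  refine .of_injective (by fun_prop) (by simp [hc0])
    ((injective_iff_map_eq_zero _).2 fun v hv => ?_)
  rw [hderiv.fderiv] at hv
  have hv₁ : v.1 = 0 := by simpa using congrArg Prod.fst hv
  have hv₂ : v.2 = 0 := by simpa [hc0, hv₁] using congrArg Prod.snd hv
  exact Prod.ext hv₁ hv₂

/-- Writing `u = x - c(y)`, the difference `G - g` is divisible by `u²` and `∂g/∂y` by `u`, so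
the equation `g (x, y + u w) = G (x, y)` can be divided by `u²` and solved for `w`. -/
lemma aEquiv_of_eventually_eq_on_criticalCurve (hg : IsQuadraticGerm g) (hc : IsCriticalCurve g c)
    (hg1 : pdx (pdy g) 0 ≠ 0) (hg3 : VanishesToOrder 3 fun y => g (0, y)) (hc1 : deriv c 0 = 0)
    (hc_ne : ∀ᶠ t in 𝓝[≠] 0, deriv c t ≠ 0) {G : ℝ × ℝ → ℝ} (hG : ContDiff ℝ ∞ G)
    (h : ∀ᶠ t in 𝓝 0, G (c t, t) = g (c t, t) ∧ pdy G (c t, t) = 0) :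
    AEquiv (fun p => (p.1, g p)) fun p => (p.1, G p) := by
  have hcs := hc.contDiff
  have hgs := hg.contDiff
  obtain ⟨m, hm, hgm, hm_curve⟩ := exists_eq_add_sub_mul (contDiff_pdy hgs) hcs
  have hm0 : m 0 = pdx (pdy g) 0 := by
    simpa only [hc.map_zero, Prod.mk_zero_zero] using hm_curve 0
  obtain ⟨R, hR, hgR⟩ := exists_eq_add_mul_pdy_add_sq_mul hgs
  obtain ⟨K, hK, hGK⟩ := exists_sub_eq_sq_mul hG hgs hcs hc_ne (h.mono fun t ht => ht.1)
    (by filter_upwards [h, hc.eventually_pdy_eq_zero] with t ht hct using ht.2.trans hct.symm)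
  have hR0 : R 0 = 0 := by
    have hR_axis : VanishesToOrder 1 fun s => R (0, s) :=
      .of_pow_mul (n := 2) (by fun_prop) (hg3.congr (.of_forall fun s => by
        simpa [hg.map_zero, hg.pdy_zero] using (hgR 0 s).symm))
    exact hR_axis.apply_zero
  obtain ⟨w, hw, hw_eq⟩ := exists_contDiff_mul_add_sq_mul_eq hm hK
    (u := fun p => p.1 - c p.2) (by fun_prop) hR (by rwa [hm0]) (by simp [hc.map_zero]) hR0
  refine aEquiv_iff_exists_isDiffeoGerm.2 ⟨_, id, isDiffeoGerm_add_mul hcs hc.map_zero hc1 hw,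
    ⟨contDiff_id, rfl, by simp [Function.bijective_id]⟩, ?_⟩
  have hsnd : Tendsto (Prod.snd : ℝ × ℝ → ℝ) (𝓝 0) (𝓝 0) := continuous_snd.tendsto' 0 0 rfl
  filter_upwards [hw_eq, hGK, hsnd.eventually hc.eventually_pdy_eq_zero] with p hwp hGp hcp
  refine Prod.ext rfl ?_
  simp only [id, hgR]
  have hgp := hgm p
  rw [hcp, zero_add] at hgp
  rw [hgp]
  linear_combination (p.1 - c p.2) ^ 2 * hwp - hGp

lemma aEquiv_iff_curveEquiv_discriminantCurve {g' : ℝ × ℝ → ℝ} {c' : ℝ → ℝ}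
    (hg : IsQuadraticGerm g) (hc : IsCriticalCurve g c) (hg1 : pdx (pdy g) 0 ≠ 0)
    (hg3 : VanishesToOrder 3 fun y => g (0, y)) (hc1 : deriv c 0 = 0)
    (hc_ne : ∀ᶠ t in 𝓝[≠] 0, deriv c t ≠ 0) (hg' : IsQuadraticGerm g')
    (hc' : IsCriticalCurve g' c') :
    AEquiv (fun p => (p.1, g' p)) (fun p => (p.1, g p)) ↔
      CurveEquiv (discriminantCurve g' c') (discriminantCurve g c) := by
  refine ⟨curveEquiv_discriminantCurve_of_aEquiv hg' hg hc' hc, fun h => ?_⟩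
  obtain ⟨G, hG, hgG, hGc⟩ := exists_aEquiv_of_curveEquiv hg' hc' h
  have hlim : Tendsto (fun p => (p.1, g p)) (𝓝 0) (𝓝 0) :=
    (contDiff_fst.prodMk hg.contDiff).continuous.tendsto' 0 0 (by simp [hg.map_zero])
  exact hgG.trans
    ((aEquiv_of_eventually_eq_on_criticalCurve hg hc hg1 hg3 hc1 hc_ne hG hGc).symm hlim)

end FixedDiscriminant

/-! ### Germs with the jet of the butterfly -/

/-- Germs `xy + y⁵ + a y⁶ + b y⁷` modulo terms of order `8` on the axis `x = 0` and, in the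
coefficient of `x`, of order `5`: these are the terms which the `A`-class of `(x, g(x, y))`
depends on. -/
structure IsButterflyForm (g : ℝ × ℝ → ℝ) (a b : ℝ) : Prop where
  contDiff : ContDiff ℝ ∞ g
  vanishesToOrder_axis : VanishesToOrder 8 fun y => g (0, y) - (y ^ 5 + a * y ^ 6 + b * y ^ 7)
  vanishesToOrder_pdx : VanishesToOrder 5 fun y => pdx g (0, y) - y

lemma exists_eq_axis_add_mul {h : ℝ × ℝ → ℝ} (hh : ContDiff ℝ ∞ h) :
    ∃ m : ℝ × ℝ → ℝ, ContDiff ℝ ∞ m ∧ (∀ x y, h (x, y) = h (0, y) + x * m (x, y)) ∧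
      ∀ y, m (0, y) = pdx h (0, y) := by
  obtain ⟨m, hm, hhm, hm_axis⟩ := exists_eq_add_sub_mul (c := fun _ => 0) hh contDiff_const
  exact ⟨m, hm, fun x y => by simpa using hhm (x, y), hm_axis⟩

lemma VanishesToOrder.sub_axis {n : ℕ} {h : ℝ × ℝ → ℝ} {x : ℝ → ℝ} (hx : VanishesToOrder n x)
    (hh : ContDiff ℝ ∞ h) (hxs : ContDiff ℝ ∞ x) :
    VanishesToOrder n fun t => h (x t, t) - h (0, t) := by
  obtain ⟨m, hm, hhm, -⟩ := exists_eq_axis_add_mul hh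
  refine (VanishesToOrder.contDiff_mul (g := fun t => m (x t, t)) (by fun_prop) hx).congr
    (.of_forall fun t => ?_)
  simp only [hhm (x t)]
  ring

lemma VanishesToOrder.eventually_ne_zero {n : ℕ} {f : ℝ → ℝ} {k : ℝ} (hk : k ≠ 0)
    (hf : VanishesToOrder (n + 1) fun t => f t - k * t ^ n) : ∀ᶠ t in 𝓝[≠] 0, f t ≠ 0 := by
  obtain ⟨r, hr, hfr⟩ := hf
  have hunit : ∀ᶠ t in 𝓝 0, k + t * r t ≠ 0 :=
    ContinuousAt.eventually_ne (by have := hr.continuous; fun_prop) (by simpa using hk)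
  filter_upwards [hfr.filter_mono nhdsWithin_le_nhds, hunit.filter_mono nhdsWithin_le_nhds,
    self_mem_nhdsWithin] with t ht hkt ht0
  rw [show f t = t ^ n * (k + t * r t) by linear_combination ht]
  exact mul_ne_zero (pow_ne_zero n ht0) hkt

lemma IsCriticalCurve.exists_pdy_axis_add_mul_eq_zero {g : ℝ × ℝ → ℝ} {c : ℝ → ℝ}
    (hc : IsCriticalCurve g c) (hg : ContDiff ℝ ∞ g) :
    ∃ m : ℝ × ℝ → ℝ, ContDiff ℝ ∞ m ∧ (∀ y, m (0, y) = pdx (pdy g) (0, y)) ∧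
      ∀ᶠ t in 𝓝 0, pdy g (0, t) + c t * m (c t, t) = 0 := by
  obtain ⟨m, hm, hgm, hm_axis⟩ := exists_eq_axis_add_mul (contDiff_pdy hg)
  exact ⟨m, hm, hm_axis,
    hc.eventually_pdy_eq_zero.mono fun t ht => (hgm (c t) t).symm.trans ht⟩

namespace IsButterflyForm

variable {g : ℝ × ℝ → ℝ} {a b : ℝ} {c : ℝ → ℝ}

lemma vanishesToOrder_pdy (h : IsButterflyForm g a b) :
    VanishesToOrder 7 fun y => pdy g (0, y) - (5 * y ^ 4 + 6 * a * y ^ 5 + 7 * b * y ^ 6) := by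
  refine h.vanishesToOrder_axis.deriv.congr (.of_forall fun y => ?_)
  have hpdy := hasDerivAt_comp_prodMk h.contDiff (hasDerivAt_const y 0) (hasDerivAt_id' y)
  have hpoly := ((hasDerivAt_pow 5 y).fun_add ((hasDerivAt_pow 6 y).const_mul a)).fun_add
    ((hasDerivAt_pow 7 y).const_mul b)
  simp only
  rw [(hpdy.fun_sub hpoly).deriv]
  push_cast
  ring

lemma vanishesToOrder_pdx_pdy (h : IsButterflyForm g a b) :
    VanishesToOrder 4 fun y => pdx (pdy g) (0, y) - 1 := by
  refine h.vanishesToOrder_pdx.deriv.congr (.of_forall fun y => ?_)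
  have hpdy := hasDerivAt_comp_prodMk (contDiff_pdx h.contDiff) (hasDerivAt_const y 0)
    (hasDerivAt_id' y)
  simp only
  rw [(hpdy.fun_sub (hasDerivAt_id' y)).deriv, pdx_pdy_comm h.contDiff]
  ring

lemma vanishesToOrder_five (h : IsButterflyForm g a b) : VanishesToOrder 5 fun y => g (0, y) := by
  have hpoly : VanishesToOrder 5 fun y => y ^ 5 * (1 + a * y + b * y ^ 2) :=
    ⟨_, by fun_prop, .of_forall fun _ => rfl⟩
  refine ((h.vanishesToOrder_axis.mono (by norm_num)).add hpoly).congr (.of_forall fun y => ?_)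
  simp only
  ring

lemma vanishesToOrder_pdy_four (h : IsButterflyForm g a b) :
    VanishesToOrder 4 fun y => pdy g (0, y) :=
  deriv_snd_eq_pdy h.contDiff 0 ▸ h.vanishesToOrder_five.deriv

lemma isQuadraticGerm (h : IsButterflyForm g a b) : IsQuadraticGerm g := by
  have hx : pdx g 0 = 0 := (sub_zero _).symm.trans h.vanishesToOrder_pdx.apply_zero
  have hy : pdy g 0 = 0 := h.vanishesToOrder_pdy_four.apply_zero
  refine ⟨h.contDiff, h.vanishesToOrder_five.apply_zero, ?_⟩
  ext <;> simp [fderiv_apply_eq_pdx_add_pdy, hx, hy]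

lemma pdx_pdy_zero (h : IsButterflyForm g a b) : pdx (pdy g) 0 = 1 :=
  sub_eq_zero.1 h.vanishesToOrder_pdx_pdy.apply_zero

lemma exists_isCriticalCurve (h : IsButterflyForm g a b) : ∃ c, IsCriticalCurve g c :=
  _root_.exists_isCriticalCurve h.contDiff h.isQuadraticGerm.pdy_zero (by simp [h.pdx_pdy_zero])

lemma vanishesToOrder_criticalCurve (h : IsButterflyForm g a b) (hc : IsCriticalCurve g c) :
    VanishesToOrder 4 c := by
  have hcs := hc.contDiff
  obtain ⟨m, hm, hm_axis, hcm⟩ := hc.exists_pdy_axis_add_mul_eq_zero h.contDiff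
  have hm0 : m (c 0, 0) ≠ 0 := by
    rw [hc.map_zero, hm_axis, Prod.mk_zero_zero, h.pdx_pdy_zero]
    exact one_ne_zero
  obtain ⟨k, hk, hmk⟩ := exists_contDiff_eventually_mul_eq_one (m := fun t => m (c t, t))
    (by fun_prop) hm0
  refine (VanishesToOrder.contDiff_mul hk h.vanishesToOrder_pdy_four).neg.congr ?_
  filter_upwards [hcm, hmk] with t hcmt hmkt
  linear_combination k t * hcmt - c t * hmkt

/-- Along the critical curve `0 = ∂g/∂y = ∂g/∂y (0, t) + c (1 + O(t⁴))`, and `c = O(t⁴)`. -/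
lemma vanishesToOrder_criticalCurve_add_pdy (h : IsButterflyForm g a b)
    (hc : IsCriticalCurve g c) : VanishesToOrder 8 fun t => c t + pdy g (0, t) := by
  obtain ⟨m, hm, hm_axis, hcm⟩ := hc.exists_pdy_axis_add_mul_eq_zero h.contDiff
  have hc4 := h.vanishesToOrder_criticalCurve hc
  have hm4 := (hc4.sub_axis hm hc.contDiff).add h.vanishesToOrder_pdx_pdy
  refine (hc4.mul hm4).neg.congr (hcm.mono fun t hcmt => ?_)
  simp only [hm_axis]
  linear_combination hcmt

lemma vanishesToOrder_criticalValue (h : IsButterflyForm g a b) (hc : IsCriticalCurve g c) :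
    VanishesToOrder 8 fun t => g (c t, t) - (g (0, t) + t * c t) := by
  have hcs := hc.contDiff
  obtain ⟨n, hn, hgn, hn_axis⟩ := exists_eq_axis_add_mul h.contDiff
  have hc4 := h.vanishesToOrder_criticalCurve hc
  have hn4 := (hc4.sub_axis hn hcs).add (h.vanishesToOrder_pdx.mono (by norm_num : 4 ≤ 5))
  refine (hc4.mul hn4).congr (.of_forall fun t => ?_)
  simp only [hgn (c t), hn_axis]
  ring

lemma vanishesToOrder_criticalCurve_add (h : IsButterflyForm g a b) (hc : IsCriticalCurve g c) :
    VanishesToOrder 7 fun t => c t + 5 * t ^ 4 + 6 * a * t ^ 5 + 7 * b * t ^ 6 := by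
  refine (((h.vanishesToOrder_criticalCurve_add_pdy hc).mono (by norm_num)).sub
    h.vanishesToOrder_pdy).congr (.of_forall fun t => ?_)
  simp only
  ring

lemma curveEquiv_discriminantCurve (h : IsButterflyForm g a b) (hc : IsCriticalCurve g c) :
    CurveEquiv (discriminantCurve g c) (butterflyCurve (-(b - 5 / 8 * a ^ 2) / 4)) := by
  have hcs := hc.contDiff
  have hgs := h.contDiff
  refine curveEquiv_butterflyCurve (v := fun t => g (c t, t)) (by fun_prop) a b
    (h.vanishesToOrder_criticalCurve_add hc) ?_
  have ht : VanishesToOrder 1 fun t : ℝ => t := by simpa using VanishesToOrder.id_pow 1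
  refine (((h.vanishesToOrder_criticalValue hc).add h.vanishesToOrder_axis).add
    (ht.mul (h.vanishesToOrder_criticalCurve_add hc))).congr (.of_forall fun t => ?_)
  simp only
  ring

lemma deriv_criticalCurve_zero (h : IsButterflyForm g a b) (hc : IsCriticalCurve g c) :
    deriv c 0 = 0 :=
  (h.vanishesToOrder_criticalCurve hc).deriv.apply_zero

lemma eventually_deriv_criticalCurve_ne_zero (h : IsButterflyForm g a b)
    (hc : IsCriticalCurve g c) : ∀ᶠ t in 𝓝[≠] 0, deriv c t ≠ 0 := by
  have hc5 : VanishesToOrder 5 fun t => c t + 5 * t ^ 4 := by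
    have hpoly : VanishesToOrder 5 fun t => t ^ 5 * (6 * a + 7 * b * t) :=
      ⟨_, by fun_prop, .of_forall fun _ => rfl⟩
    refine (((h.vanishesToOrder_criticalCurve_add hc).mono (by norm_num)).sub hpoly).congr
      (.of_forall fun t => ?_)
    simp only
    ring
  refine VanishesToOrder.eventually_ne_zero (n := 3) (k := -20) (by norm_num)
    (hc5.deriv.congr (.of_forall fun t => ?_))
  simp only
  rw [((hc.contDiff.differentiable (by simp) t).hasDerivAt.fun_add
    ((hasDerivAt_pow 4 t).const_mul 5)).deriv]
  push_cast
  ring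

lemma aEquiv_iff {g' : ℝ × ℝ → ℝ} {a' b' : ℝ} (h : IsButterflyForm g a b)
    (h' : IsButterflyForm g' a' b') :
    AEquiv (fun p => (p.1, g p)) (fun p => (p.1, g' p)) ↔
      ∃ μ : ℝ, μ ≠ 0 ∧ b' - 5 / 8 * a' ^ 2 = (b - 5 / 8 * a ^ 2) * μ ^ 2 := by
  obtain ⟨c, hc⟩ := h.exists_isCriticalCurve
  obtain ⟨c', hc'⟩ := h'.exists_isCriticalCurve
  have hγ := h.curveEquiv_discriminantCurve hc
  have hγ' := h'.curveEquiv_discriminantCurve hc'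
  have hlim := tendsto_discriminantCurve h.contDiff h.isQuadraticGerm.map_zero hc.contDiff
    hc.map_zero
  have hlim' := tendsto_discriminantCurve h'.contDiff h'.isQuadraticGerm.map_zero hc'.contDiff
    hc'.map_zero
  calc AEquiv (fun p => (p.1, g p)) (fun p => (p.1, g' p))
      ↔ CurveEquiv (discriminantCurve g c) (discriminantCurve g' c') :=
        aEquiv_iff_curveEquiv_discriminantCurve h'.isQuadraticGerm hc' (by simp [h'.pdx_pdy_zero])
          (h'.vanishesToOrder_five.mono (by norm_num)) (h'.deriv_criticalCurve_zero hc')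
          (h'.eventually_deriv_criticalCurve_ne_zero hc') h.isQuadraticGerm hc
    _ ↔ CurveEquiv (butterflyCurve (-(b - 5 / 8 * a ^ 2) / 4))
          (butterflyCurve (-(b' - 5 / 8 * a' ^ 2) / 4)) :=
        ⟨fun h => ((hγ.symm hlim).trans h).trans hγ',
          fun h => (hγ.trans h).trans (hγ'.symm hlim')⟩
    _ ↔ _ := by
        rw [curveEquiv_butterflyCurve_iff]
        refine exists_congr fun μ => and_congr_right fun _ => ?_
        constructor <;> intro hμ
        · linear_combination -4 * hμ
        · linear_combination -1 / 4 * hμ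

end IsButterflyForm

section TaylorCoefficients

variable {g : ℝ × ℝ → ℝ}

lemma iterate_pdy_eq_iteratedDeriv (hg : ContDiff ℝ ∞ g) (j : ℕ) (x y : ℝ) :
    (pdy^[j] g) (x, y) = iteratedDeriv j (fun t => g (x, t)) y := by
  induction j generalizing g with
  | zero => simp
  | succ j ih =>
    rw [Function.iterate_succ_apply, ih (contDiff_pdy hg), iteratedDeriv_succ',
      deriv_snd_eq_pdy hg]

lemma pdx_iterate_pdy_comm (hg : ContDiff ℝ ∞ g) (j : ℕ) :
    pdx (pdy^[j] g) = pdy^[j] (pdx g) := by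
  induction j generalizing g with
  | zero => rfl
  | succ j ih =>
    rw [Function.iterate_succ_apply, Function.iterate_succ_apply, ih (contDiff_pdy hg),
      pdx_pdy_comm hg]

lemma tcoeff_zero_left (hg : ContDiff ℝ ∞ g) (j : ℕ) :
    tcoeff g 0 j = iteratedDeriv j (fun y => g (0, y)) 0 / j.factorial := by
  rw [← iterate_pdy_eq_iteratedDeriv hg]
  simp [tcoeff, Prod.mk_zero_zero]

lemma tcoeff_one_left (hg : ContDiff ℝ ∞ g) (j : ℕ) :
    tcoeff g 1 j = iteratedDeriv j (fun y => pdx g (0, y)) 0 / j.factorial := by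
  rw [← iterate_pdy_eq_iteratedDeriv (contDiff_pdx hg), ← pdx_iterate_pdy_comm hg]
  simp [tcoeff, Prod.mk_zero_zero]

lemma isButterflyForm_of_tcoeff (hg : ContDiff ℝ ∞ g)
    (h : ∀ i j, i ≤ 1 → i + j < 6 →
      tcoeff g i j = if (i, j) = (1, 1) ∨ (i, j) = (0, 5) then 1 else 0) :
    IsButterflyForm g (tcoeff g 0 6) (tcoeff g 0 7) where
  contDiff := hg
  vanishesToOrder_axis := by
    refine (vanishesToOrder_sub_taylor (f := fun y => g (0, y)) (by fun_prop) 8).congr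
      (.of_forall fun y => ?_)
    simp only [← tcoeff_zero_left hg, Finset.sum_range_succ, Finset.sum_range_zero]
    rw [h 0 0, h 0 1, h 0 2, h 0 3, h 0 4, h 0 5] <;> norm_num
  vanishesToOrder_pdx := by
    have hgx := contDiff_pdx hg
    refine (vanishesToOrder_sub_taylor (f := fun y => pdx g (0, y)) (by fun_prop) 5).congr
      (.of_forall fun y => ?_)
    simp only [← tcoeff_one_left hg, Finset.sum_range_succ, Finset.sum_range_zero]
    rw [h 1 0, h 1 1, h 1 2, h 1 3, h 1 4] <;> norm_num

end TaylorCoefficients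

lemma isButterflyForm_model (b : ℝ) :
    IsButterflyForm (fun p => p.1 * p.2 + p.2 ^ 5 + b * p.2 ^ 7) 0 b where
  contDiff := by fun_prop
  vanishesToOrder_axis := ⟨0, contDiff_const, .of_forall fun y => by simp⟩
  vanishesToOrder_pdx := by
    refine ⟨0, contDiff_const, .of_forall fun y => ?_⟩
    have hpdx := hasDerivAt_comp_prodMk (g := fun p => p.1 * p.2 + p.2 ^ 5 + b * p.2 ^ 7)
      (by fun_prop) (hasDerivAt_id' 0) (hasDerivAt_const 0 y)
    have hline := (((hasDerivAt_id' 0).mul_const y).add_const (y ^ 5)).add_const (b * y ^ 7)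
    simpa [sub_eq_zero] using hpdx.unique hline

theorem stmt3_general (f : ℝ × ℝ → ℝ × ℝ) (g : ℝ × ℝ → ℝ) (hg : ContDiff ℝ ∞ g)
    (hf : ∀ p, f p = (p.1, g p))
    (hcoeff : ∀ i j, i ≤ 1 → i + j < 6 →
      tcoeff g i j = if (i, j) = (1, 1) ∨ (i, j) = (0, 5) then 1 else 0) :
    (tcoeff g 0 7 - 5 / 8 * tcoeff g 0 6 ^ 2 ≠ 0 ↔
      ∃ ε : ℝ, (ε = 1 ∨ ε = -1) ∧
        AEquiv f (fun p => (p.1, p.1 * p.2 + p.2 ^ 5 + ε * p.2 ^ 7))) ∧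
    (tcoeff g 0 7 - 5 / 8 * tcoeff g 0 6 ^ 2 = 0 ↔
      AEquiv f (fun p => (p.1, p.1 * p.2 + p.2 ^ 5))) := by
  set I := tcoeff g 0 7 - 5 / 8 * tcoeff g 0 6 ^ 2
  have hequiv (ε : ℝ) : AEquiv f (fun p => (p.1, p.1 * p.2 + p.2 ^ 5 + ε * p.2 ^ 7)) ↔
      ∃ μ : ℝ, μ ≠ 0 ∧ ε = I * μ ^ 2 := by
    rw [funext hf, (isButterflyForm_of_tcoeff hg hcoeff).aEquiv_iff (isButterflyForm_model ε)]
    simp [I]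
  have helder := hequiv 0
  simp only [zero_mul, add_zero] at helder
  simp only [hequiv, helder]
  refine ⟨⟨fun hI => ?_, ?_⟩, fun hI => ⟨1, one_ne_zero, by simp [hI]⟩, ?_⟩
  · have hI' : 0 < |I| := abs_pos.2 hI
    refine ⟨I / |I|, eq_or_eq_neg_of_abs_eq ?_, (√|I|)⁻¹, by positivity, ?_⟩
    · rw [abs_div, abs_abs, div_self hI'.ne']
    · rw [inv_pow, Real.sq_sqrt hI'.le, div_eq_mul_inv]
  · rintro ⟨ε, hε, μ, -, hεμ⟩ hI
    rw [hI, zero_mul] at hεμ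
    norm_num [hεμ] at hε
  · rintro ⟨μ, hμ, hIμ⟩
    exact (mul_eq_zero.1 hIμ.symm).resolve_right (pow_ne_zero 2 hμ)

theorem stmt3 (f : ℝ × ℝ → ℝ × ℝ) (g : ℝ × ℝ → ℝ) (hf0 : f 0 = 0)
    (hform : HasForm f g 6 (fun i j => if (i, j) = (1, 1) ∨ (i, j) = (0, 5) then 1 else 0)) :
    (tcoeff g 0 7 - 5 / 8 * tcoeff g 0 6 ^ 2 ≠ 0 ↔
      ∃ ε : ℝ, (ε = 1 ∨ ε = -1) ∧
        AEquiv f (fun p => (p.1, p.1 * p.2 + p.2 ^ 5 + ε * p.2 ^ 7))) ∧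
    (tcoeff g 0 7 - 5 / 8 * tcoeff g 0 6 ^ 2 = 0 ↔
      AEquiv f (fun p => (p.1, p.1 * p.2 + p.2 ^ 5))) :=
  stmt3_general f g hform.1 hform.2.1 fun i j _ => hform.2.2 i j
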